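/- arXiv:2404.14972 — 2 statements merged into one kernel-verified Lean document; each statement's English description precedes it below -/
import Mathlib

section
/- Fix τ ∈ (2,3), an integer d ≥ 1, a graph H on [k] with edge set E_H, and γ > 1. A vector (α*,β*) ∈ F maximizes f_H^{(d)} over F if and only if (α*,β*) maximizes the function f(α,β) = k + (1−τ) Σ_{i=1}^k α_i + d Σ_{j=2}^k min_{i<j} β_{ij} over the set of (α,β) ∈ F satisfying α_i + α_j ≥ 1 + d β_{ij} for all (i,j) ∈ E_H. In particular, the set of optimal solutions of the general optimization problem does not depend on γ ∈ (1,∞). -/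
open MeasureTheory Filter Finset

noncomputable section

instance : Fact ((0:ℝ) < 1) := ⟨one_pos⟩

/-- The `d`-dimensional torus `ℝ^d/ℤ^d`, with the sup of coordinatewise circle distances. -/
abbrev Torus (d : ℕ) := Fin d → AddCircle (1 : ℝ)

/-- Sample space of the GIRG on `n` vertices: weights, positions, and iid uniform
`[0,1]` coins deciding the presence of each potential edge. -/
abbrev GirgΩ (d n : ℕ) := (Fin n → ℝ) × (Fin n → Torus d) × (Sym2 (Fin n) → ℝ)

/-- The law of the randomness of the GIRG: iid weights with law `μW`, iid uniform positions
on the torus, iid uniform coins. -/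
def girgMeasure (μW : Measure ℝ) (d n : ℕ) : Measure (GirgΩ d n) :=
  (Measure.pi fun _ : Fin n => μW).prod
    ((Measure.pi fun _ : Fin n => (volume : Measure (Torus d))).prod
      (Measure.pi fun _ : Sym2 (Fin n) => volume.restrict (Set.Icc (0:ℝ) 1)))

/-- mean `μ = E[W]` of the weight distribution -/
def wMean (μW : Measure ℝ) : ℝ := ∫ x, x ∂μW

/-- Power-law tail assumption: `W ≥ 1` a.s. and `P(W > x) = c x^{1-τ} (1+o(1))` as `x → ∞`. -/
def WeightTail (τ c : ℝ) (μW : Measure ℝ) : Prop :=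
  0 < c ∧ μW (Set.Iio 1) = 0 ∧
    Tendsto (fun x : ℝ => (μW (Set.Ioi x)).toReal / (c * x ^ (1 - τ))) atTop (nhds 1)

/-- GIRG connection probability `min(1, (w_u w_v / (n μ ‖x_u - x_v‖^d))^γ)`. -/
def connProb (γ μbar : ℝ) (d n : ℕ) (w : Fin n → ℝ) (x : Fin n → Torus d)
    (u v : Fin n) : ℝ :=
  min 1 ((w u * w v / ((n : ℝ) * μbar * dist (x u) (x v) ^ d)) ^ γ)

/-- `u` and `v` are joined by an edge of the GIRG in outcome `ω`. -/
def girgEdge (γ μbar : ℝ) (d n : ℕ) (ω : GirgΩ d n) (u v : Fin n) : Prop :=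
  u ≠ v ∧ ω.2.2 s(u, v) ≤ connProb γ μbar d n ω.1 ω.2.1 u v

/-- the window `[ε t, t/ε]` -/
def windowIcc (ε t : ℝ) : Set ℝ := Set.Icc (ε * t) (t / ε)

/-- The set `M_ε^{(α,β)}` of ordered `k`-tuples of distinct vertices with prescribed
weights and inter-distances. -/
def Mset {k : ℕ} (ε : ℝ) (α : Fin k → ℝ) (β : Fin k → Fin k → ℝ) (d n : ℕ)
    (w : Fin n → ℝ) (x : Fin n → Torus d) : Set (Fin k → Fin n) :=
  {v | Function.Injective v ∧
    (∀ i, w (v i) ∈ windowIcc ε ((n : ℝ) ^ (α i))) ∧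
    (∀ i j : Fin k, i < j → dist (x (v i)) (x (v j)) ∈ windowIcc ε ((n : ℝ) ^ (β i j)))}

/-- `N^{sub}(H; M_ε^{(α,β)})` -/
def nSubM {k : ℕ} (H : SimpleGraph (Fin k)) (γ μbar ε : ℝ) (α : Fin k → ℝ)
    (β : Fin k → Fin k → ℝ) (d n : ℕ) (ω : GirgΩ d n) : ℕ :=
  Set.ncard {v : Fin k → Fin n | v ∈ Mset ε α β d n ω.1 ω.2.1 ∧
    ∀ i j : Fin k, H.Adj i j → girgEdge γ μbar d n ω (v i) (v j)}

/-- `N^{ind}(H; M_ε^{(α,β)})` -/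
def nIndM {k : ℕ} (H : SimpleGraph (Fin k)) (γ μbar ε : ℝ) (α : Fin k → ℝ)
    (β : Fin k → Fin k → ℝ) (d n : ℕ) (ω : GirgΩ d n) : ℕ :=
  Set.ncard {v : Fin k → Fin n | v ∈ Mset ε α β d n ω.1 ω.2.1 ∧
    ∀ i j : Fin k, i ≠ j → (H.Adj i j ↔ girgEdge γ μbar d n ω (v i) (v j))}

/-- `N^{sub}(H)` -/
def nSubTotal {k : ℕ} (H : SimpleGraph (Fin k)) (γ μbar : ℝ) (d n : ℕ)
    (ω : GirgΩ d n) : ℕ :=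
  Set.ncard {v : Fin k → Fin n | Function.Injective v ∧
    ∀ i j : Fin k, H.Adj i j → girgEdge γ μbar d n ω (v i) (v j)}

/-- `N^{ind}(H)` -/
def nIndTotal {k : ℕ} (H : SimpleGraph (Fin k)) (γ μbar : ℝ) (d n : ℕ)
    (ω : GirgΩ d n) : ℕ :=
  Set.ncard {v : Fin k → Fin n | Function.Injective v ∧
    ∀ i j : Fin k, i ≠ j → (H.Adj i j ↔ girgEdge γ μbar d n ω (v i) (v j))}

/-- `β` read as a symmetric matrix (only entries with `i < j` are meaningful). -/
def bsym {k : ℕ} (β : Fin k → Fin k → ℝ) (i j : Fin k) : ℝ := if i < j then β i j else β j i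

/-- The feasible region `F`. -/
def Feasible (τ : ℝ) (d : ℕ) {k : ℕ} (α : Fin k → ℝ) (β : Fin k → Fin k → ℝ) : Prop :=
  (∀ i, α i ∈ Set.Icc (0 : ℝ) (1 / (τ - 1))) ∧
  (∀ i j : Fin k, i < j → β i j ∈ Set.Icc (-(1 / (d : ℝ))) 0) ∧
  (∀ i j s : Fin k, i < j → s ≠ i → s ≠ j → β i j ≤ max (bsym β i s) (bsym β j s))

/-- `min_{i<j} β_{ij}` (with value `0 = sInf ∅` for the first vertex `j`,
which does not contribute). -/
def minBeta {k : ℕ} (β : Fin k → Fin k → ℝ) (j : Fin k) : ℝ :=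
  sInf {x : ℝ | ∃ i, i < j ∧ x = β i j}

open scoped Classical in
/-- The exponent `f_H(α,β)`. -/
def fExp (τ γ : ℝ) (d : ℕ) {k : ℕ} (H : SimpleGraph (Fin k))
    (α : Fin k → ℝ) (β : Fin k → Fin k → ℝ) : ℝ :=
  (k : ℝ) + (1 - τ) * ∑ i, α i + (d : ℝ) * ∑ j, minBeta β j +
    γ * ∑ p ∈ Finset.univ.filter (fun p : Fin k × Fin k => p.1 < p.2 ∧ H.Adj p.1 p.2),
        min (α p.1 + α p.2 - (d : ℝ) * β p.1 p.2 - 1) 0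

/-- Extra constraints for the induced optimization problem:
`α_i + α_j ≤ 1 + d β_{ij}` for all non-edges. -/
def IndConstr (d : ℕ) {k : ℕ} (H : SimpleGraph (Fin k)) (α : Fin k → ℝ)
    (β : Fin k → Fin k → ℝ) : Prop :=
  ∀ i j : Fin k, i < j → ¬H.Adj i j → α i + α j ≤ 1 + (d : ℝ) * β i j

/-- `(α,β)` is an optimal solution of the general optimization problem. -/
def IsOptimalSub (τ γ : ℝ) (d : ℕ) {k : ℕ} (H : SimpleGraph (Fin k))
    (α : Fin k → ℝ) (β : Fin k → Fin k → ℝ) : Prop :=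
  Feasible τ d α β ∧
    ∀ α' β', Feasible τ d α' β' → fExp τ γ d H α' β' ≤ fExp τ γ d H α β

/-- `(α,β)` is an optimal solution of the induced optimization problem. -/
def IsOptimalInd (τ γ : ℝ) (d : ℕ) {k : ℕ} (H : SimpleGraph (Fin k))
    (α : Fin k → ℝ) (β : Fin k → Fin k → ℝ) : Prop :=
  Feasible τ d α β ∧ IndConstr d H α β ∧
    ∀ α' β', Feasible τ d α' β' → IndConstr d H α' β' →
      fExp τ γ d H α' β' ≤ fExp τ γ d H α β

/-- the two kinds of subgraph counts -/
inductive StarKind | ind | sub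

/-- `N^⋆(H; M_ε^{(α,β)})` -/
def starNM (s : StarKind) {k : ℕ} (H : SimpleGraph (Fin k)) (γ μbar ε : ℝ) (α : Fin k → ℝ)
    (β : Fin k → Fin k → ℝ) (d n : ℕ) (ω : GirgΩ d n) : ℕ :=
  match s with
  | .sub => nSubM H γ μbar ε α β d n ω
  | .ind => nIndM H γ μbar ε α β d n ω

/-- `N^⋆(H)` -/
def starNTotal (s : StarKind) {k : ℕ} (H : SimpleGraph (Fin k)) (γ μbar : ℝ) (d n : ℕ)
    (ω : GirgΩ d n) : ℕ :=
  match s with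
  | .sub => nSubTotal H γ μbar d n ω
  | .ind => nIndTotal H γ μbar d n ω

/-- optimality in the optimization problem corresponding to `⋆` -/
def starIsOptimal (s : StarKind) (τ γ : ℝ) (d : ℕ) {k : ℕ} (H : SimpleGraph (Fin k))
    (α : Fin k → ℝ) (β : Fin k → Fin k → ℝ) : Prop :=
  match s with
  | .sub => IsOptimalSub τ γ d H α β
  | .ind => IsOptimalInd τ γ d H α β

/-- the optimal value `f_H^*` of the optimization problem corresponding to `⋆` -/
def starOptVal (s : StarKind) (τ γ : ℝ) (d : ℕ) {k : ℕ} (H : SimpleGraph (Fin k)) : ℝ :=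
  match s with
  | .sub => sSup {x | ∃ α β, Feasible τ d α β ∧ x = fExp τ γ d H α β}
  | .ind => sSup {x | ∃ α β, Feasible τ d α β ∧ IndConstr d H α β ∧ x = fExp τ γ d H α β}

/-- `(α,β)` is the unique optimal solution (in the `α`-variables and the
`β`-variables with `i < j`). -/
def UniquelyOptimal (s : StarKind) (τ γ : ℝ) (d : ℕ) {k : ℕ} (H : SimpleGraph (Fin k))
    (α : Fin k → ℝ) (β : Fin k → Fin k → ℝ) : Prop :=
  starIsOptimal s τ γ d H α β ∧
    ∀ α' β', starIsOptimal s τ γ d H α' β' →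
      α' = α ∧ ∀ i j : Fin k, i < j → β' i j = β i j


/-- the "edge-energy" constraints `α_i + α_j ≥ 1 + d β_{ij}` for all edges of `H` -/
def EdgeConstr (d : ℕ) {k : ℕ} (H : SimpleGraph (Fin k)) (α : Fin k → ℝ)
    (β : Fin k → Fin k → ℝ) : Prop :=
  ∀ i j : Fin k, i < j → H.Adj i j → 1 + (d : ℝ) * β i j ≤ α i + α j

/-- the linear part `f(α,β) = k + (1-τ) Σ α_i + d Σ_j min_{i<j} β_{ij}` of the objective -/
def fLin (τ : ℝ) (d : ℕ) {k : ℕ} (α : Fin k → ℝ) (β : Fin k → Fin k → ℝ) : ℝ :=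
  (k : ℝ) + (1 - τ) * ∑ i, α i + (d : ℝ) * ∑ j, minBeta β j

lemma aux_le {k : ℕ} (β : Fin k → Fin k → ℝ) {i j : Fin k} (h : i < j) : minBeta β j ≤ β i j := by
  apply csInf_le
  · apply Set.Finite.bddBelow
    apply (Set.finite_range (fun i => β i j)).subset
    rintro x ⟨i, _, rfl⟩
    exact ⟨i, rfl⟩
  · exact ⟨i, h, rfl⟩

lemma aux_mem {k : ℕ} (β : Fin k → Fin k → ℝ) {i j : Fin k} (h : i < j) :
    ∃ i, i < j ∧ minBeta β j = β i j := by
  have hf : {x : ℝ | ∃ i, i < j ∧ x = β i j}.Finite := by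
    apply (Set.finite_range (fun i => β i j)).subset
    rintro x ⟨i, _, rfl⟩
    exact ⟨i, rfl⟩
  have hne : {x : ℝ | ∃ i, i < j ∧ x = β i j}.Nonempty := ⟨β i j, i, h, rfl⟩
  exact hne.csInf_mem hf

lemma aux_empty {k : ℕ} (β : Fin k → Fin k → ℝ) {j : Fin k} (h : ¬ ∃ i, i < j) :
    minBeta β j = 0 := by
  have : {x : ℝ | ∃ i, i < j ∧ x = β i j} = ∅ := by
    ext x
    simp only [Set.mem_setOf_eq, Set.mem_empty_iff_false, iff_false]
    rintro ⟨i, hi, _⟩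
    exact h ⟨i, hi⟩
  rw [minBeta, this, Real.sInf_empty]

/-- lower the entry `u v` to `a` and take the ultrametric closure -/
def lowB {k : ℕ} (B : Fin k → Fin k → ℝ) (u v : Fin k) (a : ℝ) (i j : Fin k) : ℝ :=
  min (B i j) (min (max (max (B i u) a) (B v j)) (max (max (B i v) a) (B u j)))

lemma lowB_le_iff {k : ℕ} (B : Fin k → Fin k → ℝ) (u v : Fin k) (a : ℝ) (i j : Fin k) (t : ℝ) :
    lowB B u v a i j ≤ t ↔ B i j ≤ t ∨ (B i u ≤ t ∧ a ≤ t ∧ B v j ≤ t) ∨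
      (B i v ≤ t ∧ a ≤ t ∧ B u j ≤ t) := by
  simp only [lowB, min_le_iff, max_le_iff, and_assoc]

lemma lowB_symm {k : ℕ} (B : Fin k → Fin k → ℝ) (u v : Fin k) (a : ℝ)
    (hs : ∀ i j, B i j = B j i) (i j : Fin k) : lowB B u v a i j = lowB B u v a j i := by
  apply eq_of_forall_ge_iff
  intro t
  rw [lowB_le_iff, lowB_le_iff, hs j i, hs j u, hs v i, hs j v, hs u i]
  tauto

lemma lowB_ultra {k : ℕ} (B : Fin k → Fin k → ℝ) (u v : Fin k) (a : ℝ)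
    (hs : ∀ i j, B i j = B j i) (hu : ∀ i j s, B i j ≤ max (B i s) (B s j)) (i j s : Fin k) :
    lowB B u v a i j ≤ max (lowB B u v a i s) (lowB B u v a s j) := by
  set t := max (lowB B u v a i s) (lowB B u v a s j) with ht
  have h1 : lowB B u v a i s ≤ t := le_max_left _ _
  have h2 : lowB B u v a s j ≤ t := le_max_right _ _
  have tr : ∀ x y z, B x y ≤ t → B y z ≤ t → B x z ≤ t := fun x y z hx hy =>
    (hu x z y).trans (max_le hx hy)
  have sy : ∀ x y, B x y ≤ t → B y x ≤ t := fun x y h => by rw [hs]; exact h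
  clear_value t
  clear ht
  rw [lowB_le_iff] at h1 h2 ⊢
  rcases h1 with h1 | ⟨h1, ha, h1'⟩ | ⟨h1, ha, h1'⟩ <;>
  rcases h2 with h2 | ⟨h2, hb, h2'⟩ | ⟨h2, hb, h2'⟩
  · exact Or.inl (tr _ _ _ h1 h2)
  · exact Or.inr (Or.inl ⟨tr _ _ _ h1 h2, hb, h2'⟩)
  · exact Or.inr (Or.inr ⟨tr _ _ _ h1 h2, hb, h2'⟩)
  · exact Or.inr (Or.inl ⟨h1, ha, tr _ _ _ h1' h2⟩)
  · exact Or.inr (Or.inl ⟨h1, ha, h2'⟩)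
  · exact Or.inl (tr _ _ _ h1 h2')
  · exact Or.inr (Or.inr ⟨h1, ha, tr _ _ _ h1' h2⟩)
  · exact Or.inl (tr _ _ _ h1 h2')
  · exact Or.inr (Or.inr ⟨h1, ha, h2'⟩)

lemma lowB_sum {k : ℕ} (B : Fin k → Fin k → ℝ) (u v : Fin k) (a : ℝ) (hab : a ≤ B u v)
    (hs : ∀ i j, B i j = B j i) (hu : ∀ i j s, B i j ≤ max (B i s) (B s j)) :
    ∑ j, minBeta B j ≤ ∑ j, minBeta (lowB B u v a) j + (B u v - a) := by
  set B' := lowB B u v a with hB'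
  have key : ∀ j t, t ∈ Set.Ico (minBeta B' j) (minBeta B j) →
      (∀ i, i < j → ¬ B i j ≤ t) ∧ a ≤ t ∧ t < B u v ∧
      ((∃ i, i < j ∧ B i u ≤ t ∧ B v j ≤ t) ∨ (∃ i, i < j ∧ B i v ≤ t ∧ B u j ≤ t)) := by
    intro j t ⟨h1, h2⟩
    have tr : ∀ x y z, B x y ≤ t → B y z ≤ t → B x z ≤ t := fun x y z hx hy =>
      (hu x z y).trans (max_le hx hy)
    by_cases he : ∃ i, i < j
    · obtain ⟨i0, hi0⟩ := he
      have hfirst : ∀ i, i < j → ¬ B i j ≤ t := fun i hi hc => by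
        have := aux_le B hi
        linarith
      obtain ⟨i, hi, hm⟩ := aux_mem B' hi0
      rw [hm, hB', lowB_le_iff] at h1
      rcases h1 with h | ⟨p, q, r⟩ | ⟨p, q, r⟩
      · exact absurd h (hfirst i hi)
      · refine ⟨hfirst, q, ?_, Or.inl ⟨i, hi, p, r⟩⟩
        by_contra hc
        exact hfirst i hi (tr _ _ _ p (tr _ _ _ (not_lt.1 hc) r))
      · refine ⟨hfirst, q, ?_, Or.inr ⟨i, hi, p, r⟩⟩
        by_contra hc
        rw [hs] at hc
        exact hfirst i hi (tr _ _ _ p (tr _ _ _ (not_lt.1 hc) r))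
    · rw [aux_empty _ he] at h1 h2
      linarith
  have key2 : ∀ j j' t, j < j' → t ∈ Set.Ico (minBeta B' j) (minBeta B j) →
      t ∈ Set.Ico (minBeta B' j') (minBeta B j') → False := by
    intro j j' t hjj h h'
    have tr : ∀ x y z, B x y ≤ t → B y z ≤ t → B x z ≤ t := fun x y z hx hy =>
      (hu x z y).trans (max_le hx hy)
    have sy : ∀ x y, B x y ≤ t → B y x ≤ t := fun x y h => by rw [hs]; exact h
    obtain ⟨f1, -, -, c1⟩ := key j t h
    obtain ⟨f2, -, -, c2⟩ := key j' t h'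
    rcases c1 with ⟨i, hi, p, r⟩ | ⟨i, hi, p, r⟩ <;>
    rcases c2 with ⟨i', hi', p', r'⟩ | ⟨i', hi', p', r'⟩
    · exact f2 j hjj (tr _ _ _ (sy _ _ r) r')
    · exact f2 i (hi.trans hjj) (tr _ _ _ p r')
    · exact f2 i (hi.trans hjj) (tr _ _ _ p r')
    · exact f2 j hjj (tr _ _ _ (sy _ _ r) r')
  have hdisj : Set.PairwiseDisjoint (↑(Finset.univ : Finset (Fin k)))
      (fun j => Set.Ico (minBeta B' j) (minBeta B j)) := by
    intro j _ j' _ hne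
    rw [Function.onFun, Set.disjoint_left]
    intro t h h'
    rcases lt_or_gt_of_ne hne with hl | hl
    · exact key2 _ _ _ hl h h'
    · exact key2 _ _ _ hl h' h
  have hmeas := measure_biUnion_finset (μ := (volume : Measure ℝ)) hdisj
    (fun j _ => measurableSet_Ico)
  have hsub : (⋃ j ∈ (Finset.univ : Finset (Fin k)), Set.Ico (minBeta B' j) (minBeta B j)) ⊆
      Set.Ico a (B u v) := by
    intro t ht
    simp only [Set.mem_iUnion] at ht
    obtain ⟨j, _, hj⟩ := ht
    obtain ⟨_, x, y, _⟩ := key j t hj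
    exact ⟨x, y⟩
  have hle := measure_mono (μ := (volume : Measure ℝ)) hsub
  rw [hmeas] at hle
  simp only [Real.volume_Ico] at hle
  have h3 : ENNReal.ofReal (∑ j, max (minBeta B j - minBeta B' j) 0) ≤
      ENNReal.ofReal (B u v - a) := by
    rw [ENNReal.ofReal_sum_of_nonneg (fun j _ => le_max_right _ _)]
    refine le_trans (Finset.sum_le_sum fun j _ => ?_) hle
    rw [ENNReal.ofReal_max, ENNReal.ofReal_zero]
    simp
  rw [ENNReal.ofReal_le_ofReal_iff (by linarith)] at h3
  have h4 : ∑ j, (minBeta B j - minBeta B' j) ≤ ∑ j, max (minBeta B j - minBeta B' j) 0 :=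
    Finset.sum_le_sum fun j _ => le_max_left _ _
  rw [Finset.sum_sub_distrib] at h4
  linarith

lemma minBeta_congr {k : ℕ} {β β' : Fin k → Fin k → ℝ} (h : ∀ i j, i < j → β i j = β' i j)
    (j : Fin k) : minBeta β j = minBeta β' j := by
  unfold minBeta
  congr 1
  ext x
  constructor
  · rintro ⟨i, hi, rfl⟩
    exact ⟨i, hi, h i j hi⟩
  · rintro ⟨i, hi, rfl⟩
    exact ⟨i, hi, (h i j hi).symm⟩

lemma step {τ : ℝ} {d k : ℕ} {α : Fin k → ℝ} {β : Fin k → Fin k → ℝ} (hF : Feasible τ d α β)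
    {u v : Fin k} (huv : u < v) {a : ℝ} (ha0 : -(1 / (d : ℝ)) ≤ a) (ha : a ≤ β u v) :
    ∃ β', Feasible τ d α β' ∧ (∀ i j, i < j → β' i j ≤ β i j) ∧ β' u v ≤ a ∧
      ∑ j, minBeta β j ≤ ∑ j, minBeta β' j + (β u v - a) := by
  obtain ⟨h1, h2, h3⟩ := hF
  set L : ℝ := -(1 / (d : ℝ)) with hL
  set B : Fin k → Fin k → ℝ := fun i j => if i = j then L else bsym β i j with hB
  have hBlt : ∀ i j, i < j → B i j = β i j := by
    intro i j h
    simp [hB, bsym, h, h.ne]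
  have hs : ∀ i j, B i j = B j i := by
    intro i j
    rcases lt_trichotomy i j with h | h | h
    · simp [hB, bsym, h, h.ne, h.ne', h.not_gt]
    · rw [h]
    · simp [hB, bsym, h, h.ne, h.ne', h.not_gt]
  have hdiag : ∀ i, B i i = L := fun i => by simp [hB]
  have hbs : ∀ i j, i ≠ j → bsym β i j = B i j := fun i j h => by simp [hB, h]
  have hLB : ∀ i j, L ≤ B i j := by
    intro i j
    rcases lt_trichotomy i j with h | h | h
    · rw [hBlt _ _ h]; exact (h2 i j h).1
    · rw [h, hdiag]
    · rw [hs, hBlt _ _ h]; exact (h2 j i h).1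
  have hult : ∀ i j s, i < j → B i j ≤ max (B i s) (B s j) := by
    intro i j s h
    by_cases hi : s = i
    · subst hi; exact le_max_right _ _
    by_cases hj : s = j
    · subst hj; exact le_max_left _ _
    have := h3 i j s h hi hj
    rwa [hbs i s (Ne.symm hi), hbs j s (Ne.symm hj), hs j s, ← hBlt i j h] at this
  have hu : ∀ i j s, B i j ≤ max (B i s) (B s j) := by
    intro i j s
    rcases lt_trichotomy i j with h | h | h
    · exact hult i j s h
    · subst h
      rw [hdiag]
      exact (hLB i s).trans (le_max_left _ _)
    · have := hult j i s h
      rwa [hs i j, hs i s, hs s j, max_comm]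
  have hsum := lowB_sum B u v a (by rw [hBlt _ _ huv]; exact ha) hs hu
  refine ⟨lowB B u v a, ⟨h1, ?_, ?_⟩, ?_, ?_, ?_⟩
  · intro i j h
    constructor
    · exact le_min (hLB _ _) (le_min (le_max_of_le_right (hLB _ _)) (le_max_of_le_right (hLB _ _)))
    · refine (min_le_left _ _).trans ?_
      rw [hBlt _ _ h]
      exact (h2 i j h).2
  · intro i j s _ _ _
    have hb : ∀ x y, bsym (lowB B u v a) x y = lowB B u v a x y := by
      intro x y
      unfold bsym
      split_ifs
      · rfl
      · exact lowB_symm B u v a hs y x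
    rw [hb, hb, lowB_symm B u v a hs j s]
    exact lowB_ultra B u v a hs hu i j s
  · intro i j h
    rw [← hBlt i j h]
    exact min_le_left _ _
  · rw [lowB_le_iff, hdiag, hdiag]
    exact Or.inr (Or.inl ⟨ha0, le_rfl, ha0⟩)
  · rw [hBlt _ _ huv] at hsum
    rwa [Finset.sum_congr rfl fun j _ => minBeta_congr (β := β) (β' := B)
      (fun i j h => (hBlt i j h).symm) j]

open scoped Classical in
/-- the penalty term -/
def pen (d : ℕ) {k : ℕ} (H : SimpleGraph (Fin k)) (α : Fin k → ℝ) (β : Fin k → Fin k → ℝ) : ℝ :=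
  ∑ p ∈ Finset.univ.filter (fun p : Fin k × Fin k => p.1 < p.2 ∧ H.Adj p.1 p.2),
        min (α p.1 + α p.2 - (d : ℝ) * β p.1 p.2 - 1) 0

lemma fExp_eq (τ γ : ℝ) (d : ℕ) {k : ℕ} (H : SimpleGraph (Fin k))
    (α : Fin k → ℝ) (β : Fin k → Fin k → ℝ) :
    fExp τ γ d H α β = fLin τ d α β + γ * pen d H α β := rfl

lemma pen_nonpos (d : ℕ) {k : ℕ} (H : SimpleGraph (Fin k)) (α : Fin k → ℝ)
    (β : Fin k → Fin k → ℝ) : pen d H α β ≤ 0 :=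
  Finset.sum_nonpos fun _ _ => min_le_right _ _

lemma pen_eq_zero_iff (d : ℕ) {k : ℕ} (H : SimpleGraph (Fin k)) (α : Fin k → ℝ)
    (β : Fin k → Fin k → ℝ) : pen d H α β = 0 ↔ EdgeConstr d H α β := by
  classical
  unfold pen EdgeConstr
  rw [Finset.sum_eq_zero_iff_of_nonpos fun _ _ => min_le_right _ _]
  simp only [Finset.mem_filter, Finset.mem_univ, true_and, Prod.forall, min_eq_right_iff, and_imp]
  refine forall_congr' fun i => forall_congr' fun j => forall_congr' fun _ =>
    forall_congr' fun _ => ?_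
  constructor <;> intro h <;> linarith

lemma exists_good {τ : ℝ} {d k : ℕ} (hd : 1 ≤ d) (H : SimpleGraph (Fin k)) (α : Fin k → ℝ) :
    ∀ (n : ℕ) (β : Fin k → Fin k → ℝ),
      Set.ncard {p : Fin k × Fin k | p.1 < p.2 ∧ H.Adj p.1 p.2 ∧
        α p.1 + α p.2 < 1 + (d : ℝ) * β p.1 p.2} = n → Feasible τ d α β →
      ∃ β', Feasible τ d α β' ∧ EdgeConstr d H α β' ∧
        fLin τ d α β + pen d H α β ≤ fLin τ d α β' := by
  classical
  intro n
  induction n using Nat.strong_induction_on with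
  | _ n ih =>
  intro β hn hF
  by_cases hE : EdgeConstr d H α β
  · refine ⟨β, hF, hE, ?_⟩
    linarith [pen_nonpos d H α β]
  · unfold EdgeConstr at hE
    push Not at hE
    obtain ⟨u, v, huv, hadj, hlt⟩ := hE
    have hd0 : (0:ℝ) < d := by exact_mod_cast hd
    set a : ℝ := (α u + α v - 1) / d with ha
    have hda : (d:ℝ) * a = α u + α v - 1 := by rw [ha]; field_simp
    have ha0 : -(1 / (d : ℝ)) ≤ a := by
      rw [ha, ← neg_div]
      apply div_le_div_of_nonneg_right _ hd0.le
      linarith [(hF.1 u).1, (hF.1 v).1]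
    have hab : a ≤ β u v := by
      by_contra hc
      have := mul_lt_mul_of_pos_left (not_le.1 hc) hd0
      linarith
    obtain ⟨β', hF', hle, huv', hsum⟩ := step hF huv ha0 hab
    have hdle : ∀ i j, i < j → (d:ℝ) * β' i j ≤ d * β i j := fun i j h =>
      mul_le_mul_of_nonneg_left (hle i j h) hd0.le
    have hdu : (d:ℝ) * β' u v ≤ d * a := mul_le_mul_of_nonneg_left huv' hd0.le
    have hcard : Set.ncard {p : Fin k × Fin k | p.1 < p.2 ∧ H.Adj p.1 p.2 ∧
        α p.1 + α p.2 < 1 + (d : ℝ) * β' p.1 p.2} < n := by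
      rw [← hn]
      apply Set.ncard_lt_ncard _ (Set.toFinite _)
      refine ⟨fun p ⟨x, y, z⟩ => ⟨x, y, ?_⟩, fun hc => ?_⟩
      · linarith [hdle _ _ x]
      · have := (hc (show (u, v) ∈ _ from ⟨huv, hadj, hlt⟩)).2.2
        simp only at this
        linarith
    obtain ⟨β'', hF'', hE'', hf⟩ := ih _ hcard β' rfl hF'
    refine ⟨β'', hF'', hE'', le_trans ?_ hf⟩
    have hp : pen d H α β + d * (β u v - a) ≤ pen d H α β' := by
      unfold pen
      have hm : (u, v) ∈ Finset.univ.filter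
          (fun p : Fin k × Fin k => p.1 < p.2 ∧ H.Adj p.1 p.2) := by simp [huv, hadj]
      rw [← Finset.add_sum_erase _ _ hm, ← Finset.add_sum_erase _ _ hm]
      have e1 : min (α u + α v - (d:ℝ) * β u v - 1) 0 = -(d * (β u v - a)) := by
        rw [min_eq_left (by linarith)]
        linarith
      have e2 : min (α u + α v - (d:ℝ) * β' u v - 1) 0 = 0 := min_eq_right (by linarith)
      have e3 : ∑ p ∈ (Finset.univ.filter
          (fun p : Fin k × Fin k => p.1 < p.2 ∧ H.Adj p.1 p.2)).erase (u, v),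
            min (α p.1 + α p.2 - (d : ℝ) * β p.1 p.2 - 1) 0 ≤ ∑ p ∈ (Finset.univ.filter
          (fun p : Fin k × Fin k => p.1 < p.2 ∧ H.Adj p.1 p.2)).erase (u, v),
            min (α p.1 + α p.2 - (d : ℝ) * β' p.1 p.2 - 1) 0 := by
        refine Finset.sum_le_sum fun p hp => ?_
        have h5 := (Finset.mem_filter.1 (Finset.mem_of_mem_erase hp)).2.1
        exact min_le_min_right _ (by linarith [hdle _ _ h5])
      simp only at e1 e2 ⊢
      rw [e1, e2]
      linarith
    have := mul_le_mul_of_nonneg_left hsum hd0.le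
    rw [mul_add] at this
    unfold fLin
    linarith

lemma opt_iff
    (τ : ℝ) (d : ℕ) (hd : 1 ≤ d)
    {k : ℕ} (H : SimpleGraph (Fin k)) (γ : ℝ) (hγ : 1 < γ)
    (α : Fin k → ℝ) (β : Fin k → Fin k → ℝ) :
    IsOptimalSub τ γ d H α β ↔
      Feasible τ d α β ∧ EdgeConstr d H α β ∧
        ∀ α' β', Feasible τ d α' β' → EdgeConstr d H α' β' →
          fLin τ d α' β' ≤ fLin τ d α β := by
  constructor
  · rintro ⟨hF, hopt⟩
    simp only [fExp_eq] at hopt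
    have hp : pen d H α β = 0 := by
      obtain ⟨β', hF', hE', hle⟩ := exists_good hd H α _ β rfl hF
      have h1 := hopt α β' hF'
      rw [(pen_eq_zero_iff d H α β').2 hE'] at h1
      have h2 := pen_nonpos d H α β
      nlinarith
    refine ⟨hF, (pen_eq_zero_iff d H α β).1 hp, fun α' β' hF' hE' => ?_⟩
    have h1 := hopt α' β' hF'
    rw [(pen_eq_zero_iff d H α' β').2 hE', hp] at h1
    linarith
  · rintro ⟨hF, hE, hopt⟩
    refine ⟨hF, fun α' β' hF' => ?_⟩
    obtain ⟨β'', hF'', hE'', hle⟩ := exists_good hd H α' _ β' rfl hF'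
    have h1 := hopt α' β'' hF'' hE''
    have h2 := pen_nonpos d H α' β'
    rw [fExp_eq, fExp_eq, (pen_eq_zero_iff d H α β).2 hE]
    nlinarith

/-- `(α*,β*)` maximizes `f_H` over `F` iff it maximizes the linear
objective `f` over the feasible points satisfying `α_i + α_j ≥ 1 + d β_{ij}` on all
edges; in particular the set of optimizers does not depend on `γ ∈ (1,∞)`. -/
theorem optproblem_gamma_independent
    (τ : ℝ) (hτ : τ ∈ Set.Ioo (2:ℝ) 3) (d : ℕ) (hd : 1 ≤ d)
    {k : ℕ} (H : SimpleGraph (Fin k)) (γ : ℝ) (hγ : 1 < γ)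
    (α : Fin k → ℝ) (β : Fin k → Fin k → ℝ) :
    (IsOptimalSub τ γ d H α β ↔
      Feasible τ d α β ∧ EdgeConstr d H α β ∧
        ∀ α' β', Feasible τ d α' β' → EdgeConstr d H α' β' →
          fLin τ d α' β' ≤ fLin τ d α β) ∧
    (∀ γ' : ℝ, 1 < γ' → (IsOptimalSub τ γ d H α β ↔ IsOptimalSub τ γ' d H α β)) := by
  refine ⟨opt_iff τ d hd H γ hγ α β, fun γ' hγ' => ?_⟩
  rw [opt_iff τ d hd H γ hγ α β, opt_iff τ d hd H γ' hγ' α β]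

end
end

section
/- Let H be a graph on [k], let ⋆ ∈ {ind, sub}, and suppose the corresponding optimization problem has a unique optimal solution (α*,β*), which is either (α*,β*) ≡ (1/2, 0) or (α*,β*) ≡ (0, −1/d). Then for every (α,β) ∈ F with (α,β) ≠ (α*,β*) and every fixed ε ∈ (0,1), the ratio N^⋆(H; M_ε^{(α,β)}) / N^⋆(H; M_ε^{(α*,β*)}) converges to 0 in probability as n → ∞. -/
open MeasureTheory Filter Finset

noncomputable section

section general
open scoped ENNReal

theorem pi_lintegral_update {κ X : Type*} [Fintype κ] [DecidableEq κ] [MeasurableSpace X]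
    (μ : Measure X) [IsProbabilityMeasure μ] (i : κ) (f : (κ → X) → ℝ≥0∞) (hf : Measurable f) :
    ∫⁻ x, f x ∂(Measure.pi fun _ : κ => μ)
      = ∫⁻ x, ∫⁻ z, f (Function.update x i z) ∂μ ∂(Measure.pi fun _ : κ => μ) := by
  have hX : Nonempty X := μ.nonempty_of_neZero
  let x0 : κ → X := fun _ => hX.some
  rw [lintegral_eq_lmarginal_univ x0, lintegral_eq_lmarginal_univ x0,
    lmarginal_erase' f hf (Finset.mem_univ i)]
  have hm : Measurable fun x : κ → X => ∫⁻ z, f (Function.update x i z) ∂μ := by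
    apply Measurable.lintegral_prod_right' (f := fun p : (κ → X) × X => f (Function.update p.1 i p.2))
    apply hf.comp
    rw [measurable_pi_iff]
    intro a
    by_cases h : a = i
    · subst h; simpa using measurable_snd
    · simp only [Function.update_of_ne h]
      exact (measurable_pi_apply a).comp measurable_fst
  rw [lmarginal_erase' _ hm (Finset.mem_univ i)]
  simp

theorem pi_chain {ι κ X : Type*} [DecidableEq ι] [Fintype κ] [DecidableEq κ] [MeasurableSpace X]
    (μ : Measure X) [IsProbabilityMeasure μ] (e : ι → κ) (rk : ι → ℕ) (K : ι → Set (κ → X))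
    (hK : ∀ i, MeasurableSet (K i)) (c : ι → ℝ≥0∞) (J : Finset ι)
    (inv : ∀ i ∈ J, ∀ j ∈ J, i ≠ j → rk i ≤ rk j → ∀ x z,
      (Function.update x (e j) z ∈ K i ↔ x ∈ K i))
    (hc : ∀ j ∈ J, ∀ x, μ {z | Function.update x (e j) z ∈ K j} = c j) :
    (Measure.pi fun _ : κ => μ) {x | ∀ j ∈ J, x ∈ K j} = ∏ j ∈ J, c j := by
  classical
  induction J using Finset.induction_on_max_value rk with
  | empty => simp
  | insert a s has hmax ih =>
    have ih' := ih (fun i hi j hj => inv i (Finset.mem_insert_of_mem hi) j (Finset.mem_insert_of_mem hj))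
      (fun j hj => hc j (Finset.mem_insert_of_mem hj))
    have hms : MeasurableSet {x : κ → X | ∀ j ∈ s, x ∈ K j} := by
      have : {x : κ → X | ∀ j ∈ s, x ∈ K j} = ⋂ j ∈ s, K j := by ext; simp
      rw [this]; exact Finset.measurableSet_biInter _ fun j _ => hK j
    have heq : {x : κ → X | ∀ j ∈ insert a s, x ∈ K j} = {x | ∀ j ∈ s, x ∈ K j} ∩ K a := by
      ext x; simp [and_comm]
    have hm : MeasurableSet ({x : κ → X | ∀ j ∈ s, x ∈ K j} ∩ K a) := hms.inter (hK a)
    rw [heq, ← lintegral_indicator_one hm, pi_lintegral_update μ (e a) _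
      (measurable_one.indicator hm)]
    have : ∀ x : κ → X, ∫⁻ z, ({x : κ → X | ∀ j ∈ s, x ∈ K j} ∩ K a).indicator 1
        (Function.update x (e a) z) ∂μ
        = ({x : κ → X | ∀ j ∈ s, x ∈ K j}).indicator (fun _ => c a) x := by
      intro x
      have hupd : Measurable fun z => Function.update x (e a) z := measurable_update x
      have h1 : ∀ z, ({x : κ → X | ∀ j ∈ s, x ∈ K j} ∩ K a).indicator (1 : (κ → X) → ℝ≥0∞)
        (Function.update x (e a) z) =
          ({x : κ → X | ∀ j ∈ s, x ∈ K j}).indicator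
            (fun _ => {z | Function.update x (e a) z ∈ K a}.indicator 1 z) x := by
        intro z
        have h2 : Function.update x (e a) z ∈ {x : κ → X | ∀ j ∈ s, x ∈ K j} ↔
            x ∈ {x : κ → X | ∀ j ∈ s, x ∈ K j} := by
          simp only [Set.mem_ofPred_eq]
          refine forall₂_congr fun j hj => ?_
          exact inv j (Finset.mem_insert_of_mem hj) a (Finset.mem_insert_self _ _)
            (fun h => has (h ▸ hj)) (hmax j hj) x z
        by_cases hx : x ∈ {x : κ → X | ∀ j ∈ s, x ∈ K j}
        · by_cases hz : Function.update x (e a) z ∈ K a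
          · rw [Set.indicator_of_mem (Set.mem_inter (h2.2 hx) hz), Set.indicator_of_mem hx,
              Set.indicator_of_mem (by exact hz)]; rfl
          · rw [Set.indicator_of_notMem (fun h => hz h.2), Set.indicator_of_mem hx,
              Set.indicator_of_notMem (by exact hz)]
        · rw [Set.indicator_of_notMem (fun h => hx (h2.1 h.1)), Set.indicator_of_notMem hx]
      simp_rw [h1]
      by_cases hx : x ∈ {x : κ → X | ∀ j ∈ s, x ∈ K j}
      · simp only [Set.indicator_of_mem hx]
        have hmz : MeasurableSet {z | Function.update x (e a) z ∈ K a} := hupd (hK a)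
        rw [lintegral_indicator_one hmz, hc a (Finset.mem_insert_self _ _)]
      · simp only [Set.indicator_of_notMem hx]; simp
    simp_rw [this]
    rw [lintegral_indicator_const hms, ih', Finset.prod_insert has]

theorem pi_box {ι κ X : Type*} [DecidableEq ι] [Fintype κ] [DecidableEq κ] [MeasurableSpace X]
    (μ : Measure X) [IsProbabilityMeasure μ] (e : ι → κ) (B : ι → Set X)
    (hB : ∀ i, MeasurableSet (B i)) (J : Finset ι) (he : Set.InjOn e J) :
    (Measure.pi fun _ : κ => μ) {x | ∀ j ∈ J, x (e j) ∈ B j} = ∏ j ∈ J, μ (B j) := by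
  apply pi_chain μ e (fun _ => 0) (fun j => {x | x (e j) ∈ B j})
  · intro i; exact (measurable_pi_apply (e i)) (hB i)
  · intro i hi j hj hij _ x z
    have : e i ≠ e j := fun h => hij (he hi hj h)
    simp [Function.update_of_ne this]
  · intro j _ x
    simp

instance circleProb : IsProbabilityMeasure (volume : Measure (AddCircle (1:ℝ))) :=
  ⟨by simp [AddCircle.measure_univ]⟩

theorem torus_vol_ball {d : ℕ} (x : Torus d) {r : ℝ} (hr : 0 ≤ r) :
    volume (Metric.closedBall x r) = ENNReal.ofReal ((min 1 (2 * r)) ^ d) := by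
  rw [volume_pi, Measure.pi_closedBall _ _ hr]
  simp only [AddCircle.volume_closedBall]
  simp [ENNReal.ofReal_pow (show 0 ≤ min 1 (2 * r) by positivity)]

theorem pi_balls {ι κ : Type*} [DecidableEq ι] [Fintype κ] [DecidableEq κ] {d : ℕ}
    (e : ι → κ) (rk : ι → ℕ) (p : ι → ι) (y : ι → Torus d) (r : ι → ℝ) (J : Finset ι)
    (hr : ∀ i ∈ J, 0 ≤ r i)
    (he : Set.InjOn e J) (hp : ∀ i ∈ J, ∀ j ∈ J, rk i ≤ rk j → e (p i) ≠ e j) :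
    (Measure.pi fun _ : κ => (volume : Measure (Torus d)))
      {x | ∀ j ∈ J, dist (x (e j)) (x (e (p j)) + y j) ≤ r j}
      = ∏ j ∈ J, ENNReal.ofReal ((min 1 (2 * r j)) ^ d) := by
  apply pi_chain (volume : Measure (Torus d)) e rk
    (fun j => {x | dist (x (e j)) (x (e (p j)) + y j) ≤ r j})
  · intro i
    apply measurableSet_le _ measurable_const
    apply Continuous.measurable
    fun_prop
  · intro i hi j hj hij hrk x z
    have h1 : e i ≠ e j := fun h => hij (he hi hj h)
    have h2 := hp i hi j hj hrk
    simp [Function.update_of_ne h1, Function.update_of_ne h2]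
  · intro j hj x
    have h2 := hp j hj j hj le_rfl
    simp only [Set.mem_ofPred_eq, Function.update_self, Function.update_of_ne h2]
    exact torus_vol_ball _ (hr j hj)

theorem second_moment {Ω T : Type*} [MeasurableSpace Ω] (P : Measure Ω) [IsProbabilityMeasure P]
    (I : Finset T) (A : T → Set Ω) (hA : ∀ v, MeasurableSet (A v)) (R : T → T → Prop)
    [∀ v v', Decidable (R v v')]
    (hR : ∀ v ∈ I, ∀ v' ∈ I, ¬ R v v' → P.real (A v ∩ A v') = P.real (A v) * P.real (A v'))
    (m : ℝ) (hm : ∑ v ∈ I, P.real (A v) = m) (hm0 : 0 < m) :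
    P {ω | ∑ v ∈ I, (A v).indicator (fun _ => (1:ℝ)) ω < m / 2} ≤
      ENNReal.ofReal ((∑ v ∈ I, ∑ v' ∈ I, if R v v' then P.real (A v ∩ A v') else 0) / (m/2)^2) := by
  classical
  set X : Ω → ℝ := fun ω => ∑ v ∈ I, (A v).indicator (fun _ => (1:ℝ)) ω with hX
  have hmem : MemLp X 2 P := by
    apply memLp_finsetSum
    intro v _
    exact memLp_indicator_const 2 (hA v) 1 (Or.inr (measure_ne_top _ _))
  have hint : ∀ B : Set Ω, MeasurableSet B → Integrable (B.indicator (fun _ => (1:ℝ))) P :=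
    fun B hB => (integrable_const 1).indicator hB
  have hEX : ∫ ω, X ω ∂P = m := by
    rw [hX, integral_finsetSum _ (fun v _ => hint _ (hA v)), ← hm]
    refine Finset.sum_congr rfl fun v _ => ?_
    rw [integral_indicator_const _ (hA v)]; simp
  have hEX2 : ∫ ω, (X ^ 2) ω ∂P = ∑ v ∈ I, ∑ v' ∈ I, P.real (A v ∩ A v') := by
    have : ∀ ω, (X ^ 2) ω = ∑ v ∈ I, ∑ v' ∈ I, (A v ∩ A v').indicator (fun _ => (1:ℝ)) ω := by
      intro ω
      simp only [Pi.pow_apply, hX, sq, Finset.sum_mul_sum]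
      refine Finset.sum_congr rfl fun v _ => Finset.sum_congr rfl fun v' _ => ?_
      by_cases h1 : ω ∈ A v <;> by_cases h2 : ω ∈ A v' <;> simp [h1, h2]
    simp_rw [this]
    rw [integral_finsetSum _ (fun v _ => integrable_finsetSum _ fun v' _ =>
      hint _ ((hA v).inter (hA v')))]
    refine Finset.sum_congr rfl fun v _ => ?_
    rw [integral_finsetSum _ (fun v' _ => hint _ ((hA v).inter (hA v')))]
    refine Finset.sum_congr rfl fun v' _ => ?_
    rw [integral_indicator_const _ ((hA v).inter (hA v'))]; simp
  have hvar : ProbabilityTheory.variance X P ≤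
      ∑ v ∈ I, ∑ v' ∈ I, if R v v' then P.real (A v ∩ A v') else 0 := by
    rw [ProbabilityTheory.variance_eq_sub hmem, hEX2, hEX, ← hm, sq, Finset.sum_mul_sum,
      ← Finset.sum_sub_distrib]
    refine Finset.sum_le_sum fun v hv => ?_
    rw [← Finset.sum_sub_distrib]
    refine Finset.sum_le_sum fun v' hv' => ?_
    split_ifs with h
    · have := mul_nonneg (measureReal_nonneg (μ := P) (s := A v)) (measureReal_nonneg (μ := P) (s := A v'))
      linarith
    · rw [hR v hv v' hv' h]; simp
  have hch := ProbabilityTheory.meas_ge_le_variance_div_sq hmem (c := m/2) (by positivity)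
  rw [hEX] at hch
  refine le_trans (measure_mono ?_) (hch.trans ?_)
  · intro ω hω
    simp only [Set.mem_ofPred_eq] at hω ⊢
    rw [le_abs]; right; linarith
  · exact ENNReal.ofReal_le_ofReal (div_le_div_of_nonneg_right hvar (by positivity))

end general

section prob
open scoped ENNReal

/-- coin law -/
def coinM : Measure ℝ := volume.restrict (Set.Icc (0:ℝ) 1)

instance coinProb : IsProbabilityMeasure coinM := ⟨by simp [coinM]⟩

theorem girgMeasure_eq (μW : Measure ℝ) (d n : ℕ) : girgMeasure μW d n =
    (Measure.pi fun _ : Fin n => μW).prod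
    ((Measure.pi fun _ : Fin n => (volume : Measure (Torus d))).prod
      (Measure.pi fun _ : Sym2 (Fin n) => coinM)) := rfl

instance girgProb (μW : Measure ℝ) [IsProbabilityMeasure μW] (d n : ℕ) :
    IsProbabilityMeasure (girgMeasure μW d n) := by
  rw [girgMeasure_eq]; infer_instance

theorem girg_prod (μW : Measure ℝ) [IsProbabilityMeasure μW] (d n : ℕ) (A : Set (Fin n → ℝ))
    (B : Set (Fin n → Torus d)) (C : Set (Sym2 (Fin n) → ℝ)) :
    girgMeasure μW d n {ω | ω.1 ∈ A ∧ ω.2.1 ∈ B ∧ ω.2.2 ∈ C} =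
      (Measure.pi fun _ : Fin n => μW) A *
      ((Measure.pi fun _ : Fin n => (volume : Measure (Torus d))) B *
      (Measure.pi fun _ : Sym2 (Fin n) => coinM) C) := by
  rw [girgMeasure_eq, ← Measure.prod_prod B C, ← Measure.prod_prod]
  rfl

theorem coin_Iic {p : ℝ} (hp : 0 ≤ p) : coinM (Set.Iic p) = ENNReal.ofReal (min p 1) := by
  rw [coinM, Measure.restrict_apply measurableSet_Iic]
  have : Set.Iic p ∩ Set.Icc 0 1 = Set.Icc 0 (min p 1) := by
    ext x; simp only [Set.mem_inter_iff, Set.mem_Iic, Set.mem_Icc, le_min_iff]; tauto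
  rw [this]; simp

theorem coin_Ioi {p : ℝ} (hp : 0 ≤ p) (hp1 : p < 1) : 0 < coinM (Set.Ioi p) := by
  rw [coinM, Measure.restrict_apply measurableSet_Ioi]
  have : Set.Ioi p ∩ Set.Icc 0 1 = Set.Ioc p 1 := by
    ext x; simp only [Set.mem_inter_iff, Set.mem_Ioi, Set.mem_Icc, Set.mem_Ioc]
    constructor
    · tauto
    · rintro ⟨h1, h2⟩; exact ⟨h1, by linarith, h2⟩
  rw [this]; simp [hp1]

theorem ae_girg_pos (μW : Measure ℝ) [IsProbabilityMeasure μW] (d n : ℕ)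
    {p : (Fin n → Torus d) → Prop}
    (h : ∀ᵐ x ∂(Measure.pi fun _ : Fin n => (volume : Measure (Torus d))), p x) :
    ∀ᵐ ω ∂(girgMeasure μW d n), p ω.2.1 := by
  rw [girgMeasure_eq]
  have h1 := (Measure.quasiMeasurePreserving_fst (μ := (Measure.pi fun _ : Fin n => (volume : Measure (Torus d))))
    (ν := Measure.pi fun _ : Sym2 (Fin n) => coinM)).ae h
  exact (Measure.quasiMeasurePreserving_snd).ae h1

theorem ae_girg_coin (μW : Measure ℝ) [IsProbabilityMeasure μW] (d n : ℕ) :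
    ∀ᵐ ω ∂(girgMeasure μW d n), ∀ e, ω.2.2 e ≤ 1 := by
  rw [girgMeasure_eq]
  have h0 : ∀ᵐ y ∂(Measure.pi fun _ : Sym2 (Fin n) => coinM), ∀ e, y e ≤ 1 := by
    rw [ae_all_iff]
    intro e
    have : ∀ᵐ z ∂coinM, z ≤ 1 := by
      have := ae_restrict_mem (μ := (volume : Measure ℝ)) (measurableSet_Icc (a := (0:ℝ)) (b := 1))
      filter_upwards [this] with z hz using hz.2
    exact (Measure.quasiMeasurePreserving_eval (fun _ : Sym2 (Fin n) => coinM) e).ae this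
  have h1 := (Measure.quasiMeasurePreserving_snd (μ := (Measure.pi fun _ : Fin n => (volume : Measure (Torus d))))
    (ν := Measure.pi fun _ : Sym2 (Fin n) => coinM)).ae h0
  exact (Measure.quasiMeasurePreserving_snd).ae h1

theorem ae_girg_w (μW : Measure ℝ) [IsProbabilityMeasure μW] (d n : ℕ) {p : ℝ → Prop}
    (h : ∀ᵐ x ∂μW, p x) :
    ∀ᵐ ω ∂(girgMeasure μW d n), ∀ u, p (ω.1 u) := by
  rw [girgMeasure_eq]
  have h0 : ∀ᵐ y ∂(Measure.pi fun _ : Fin n => μW), ∀ e, p (y e) := by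
    rw [ae_all_iff]
    intro e
    exact (Measure.quasiMeasurePreserving_eval (fun _ : Fin n => μW) e).ae h
  exact (Measure.quasiMeasurePreserving_fst).ae h0

theorem sphere_null {d : ℕ} (hd : 1 ≤ d) (x : Torus d) (r : ℝ) (hr : 0 < r) :
    volume {z : Torus d | dist z x = r} = 0 := by
  have hlim : Tendsto (fun s : ℝ => ENNReal.ofReal ((min 1 (2 * r)) ^ d) -
      ENNReal.ofReal ((min 1 (2 * s)) ^ d)) (nhdsWithin r (Set.Iio r))
      (nhds (ENNReal.ofReal ((min 1 (2 * r)) ^ d) - ENNReal.ofReal ((min 1 (2 * r)) ^ d))) := by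
    apply ENNReal.Tendsto.sub tendsto_const_nhds _ (Or.inl ENNReal.ofReal_ne_top)
    apply ENNReal.tendsto_ofReal
    apply Tendsto.mono_left _ nhdsWithin_le_nhds
    apply Continuous.tendsto
    fun_prop
  rw [tsub_self] at hlim
  refine le_antisymm (ge_of_tendsto hlim ?_) (zero_le)
  have : ∀ᶠ s in nhdsWithin r (Set.Iio r), 0 < s ∧ s < r := by
    have h1 : ∀ᶠ s in nhdsWithin r (Set.Iio r), 0 < s :=
      (eventually_gt_nhds hr).filter_mono nhdsWithin_le_nhds
    filter_upwards [h1, self_mem_nhdsWithin] with s a b using ⟨a, b⟩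
  filter_upwards [this] with s hs
  have hsub : {z : Torus d | dist z x = r} ⊆ Metric.closedBall x r \ Metric.closedBall x s := by
    intro z hz
    have hz' : dist z x = r := hz
    constructor
    · exact hz'.le
    · simp only [Metric.mem_closedBall, not_le]; rw [hz']; exact hs.2
  refine (measure_mono hsub).trans ?_
  rw [measure_sdiff (Metric.closedBall_subset_closedBall hs.2.le) measurableSet_closedBall.nullMeasurableSet
    (measure_ne_top _ _), torus_vol_ball _ hr.le, torus_vol_ball _ hs.1.le]

theorem ae_dist_ne {d n : ℕ} (hd : 1 ≤ d) (r : ℝ) (hr : 0 < r) :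
    ∀ᵐ x ∂(Measure.pi fun _ : Fin n => (volume : Measure (Torus d))),
      ∀ u v, u ≠ v → dist (x u) (x v) ≠ r := by
  simp_rw [ae_all_iff]
  intro u v huv
  have hm : MeasurableSet {x : Fin n → Torus d | dist (x u) (x v) = r} := by
    apply measurableSet_eq_fun _ measurable_const
    apply Continuous.measurable; fun_prop
  have := pi_chain (volume : Measure (Torus d)) (fun _ : Unit => u) (fun _ => 0)
    (fun _ => {x : Fin n → Torus d | dist (x u) (x v) = r}) (fun _ => hm) (fun _ => 0) Finset.univ
    (by intro i _ j _ hij; exact absurd rfl hij)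
    (by intro j _ x
        simp only [Set.mem_ofPred_eq, Function.update_self, Function.update_of_ne huv.symm]
        exact sphere_null hd _ r hr)
  rw [ae_iff]
  simpa using this

end prob

section tails
open scoped ENNReal

theorem tail_upper {τ c : ℝ} (hτ : 2 < τ) (μW : Measure ℝ) [IsProbabilityMeasure μW]
    (hW : WeightTail τ c μW) :
    ∃ C, 0 < C ∧ ∀ x : ℝ, 0 < x → μW.real (Set.Ici x) ≤ C * x ^ (1 - τ) := by
  obtain ⟨hc, -, hlim⟩ := hW
  have h1 : ∀ᶠ x : ℝ in atTop, (μW (Set.Ioi x)).toReal / (c * x ^ (1 - τ)) < 2 :=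
    hlim.eventually_lt_const (by norm_num)
  obtain ⟨x0, hx0⟩ := (h1.and (eventually_gt_atTop (0:ℝ))).exists_forall_of_atTop
  have hx0p : 0 < x0 := (hx0 x0 le_rfl).2
  refine ⟨max (2 * c * (1/2) ^ (1 - τ)) ((2 * x0) ^ (τ - 1)), ?_, ?_⟩
  · exact lt_max_of_lt_left (by positivity)
  · intro x hx
    have hxp : 0 < x ^ (1 - τ) := Real.rpow_pos_of_pos hx _
    by_cases h : 2 * x0 ≤ x
    · have h2 := (hx0 (x/2) (by linarith)).1
      have hp2 : 0 < (x/2) ^ (1 - τ) := Real.rpow_pos_of_pos (by linarith) _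
      rw [div_lt_iff₀ (by positivity)] at h2
      have h3 : μW.real (Set.Ici x) ≤ (μW (Set.Ioi (x/2))).toReal := by
        refine measureReal_mono ?_ (measure_ne_top _ _)
        intro z hz
        have : x ≤ z := hz
        show x / 2 < z
        linarith
      have h4 : (x/2) ^ (1 - τ) = (1/2) ^ (1 - τ) * x ^ (1 - τ) := by
        rw [← Real.mul_rpow (by norm_num) hx.le]; ring_nf
      rw [h4] at h2
      calc _ ≤ 2 * c * (1/2) ^ (1 - τ) * x ^ (1 - τ) := by linarith
        _ ≤ _ := mul_le_mul_of_nonneg_right (le_max_left _ _) hxp.le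
    · push Not at h
      calc μW.real (Set.Ici x) ≤ 1 := measureReal_le_one
        _ = x ^ (τ - 1) * x ^ (1 - τ) := by
            rw [← Real.rpow_add hx]; simp
        _ ≤ (2 * x0) ^ (τ - 1) * x ^ (1 - τ) :=
            mul_le_mul_of_nonneg_right (Real.rpow_le_rpow hx.le h.le (by linarith)) hxp.le
        _ ≤ _ := mul_le_mul_of_nonneg_right (le_max_right _ _) hxp.le

theorem wMean_pos {τ c : ℝ} (hτ : 2 < τ) (μW : Measure ℝ) [IsProbabilityMeasure μW]
    (hW : WeightTail τ c μW) : 0 < wMean μW := by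
  have hae : ∀ᵐ x ∂μW, 1 ≤ x := by
    rw [ae_iff]
    have : {a : ℝ | ¬ 1 ≤ a} = Set.Iio 1 := by ext; simp
    rw [this]; exact hW.2.1
  obtain ⟨C, hC, hCt⟩ := tail_upper hτ μW hW
  have hint : Integrable (fun x : ℝ => x) μW := by
    refine ⟨measurable_id.aestronglyMeasurable, ?_⟩
    rw [hasFiniteIntegral_iff_ofReal (by filter_upwards [hae] with x hx; simp; linarith)]
    rw [lintegral_eq_lintegral_meas_lt (f := fun a : ℝ => a) μW (by filter_upwards [hae] with x hx; simp; linarith)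
      measurable_id.aemeasurable]
    have hsplit : Set.Ioi (0:ℝ) = Set.Ioc 0 1 ∪ Set.Ioi 1 := by
      rw [Set.Ioc_union_Ioi_eq_Ioi (by norm_num)]
    rw [hsplit]
    refine (lintegral_union_le _ _ _).trans_lt ?_
    apply ENNReal.add_lt_top.2
    constructor
    · calc ∫⁻ (t : ℝ) in Set.Ioc 0 1, μW {a | t < a} ≤ ∫⁻ (t : ℝ) in Set.Ioc 0 1, 1 :=
            lintegral_mono fun t => prob_le_one
        _ < ∞ := by simp
    · have hi : IntegrableOn (fun t : ℝ => C * t ^ (1 - τ)) (Set.Ioi 1) :=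
        (integrableOn_Ioi_rpow_of_lt (by linarith) one_pos).const_mul C
      calc ∫⁻ (t : ℝ) in Set.Ioi 1, μW {a | t < a}
          ≤ ∫⁻ (t : ℝ) in Set.Ioi 1, ENNReal.ofReal (C * t ^ (1 - τ)) := by
            apply setLIntegral_mono' measurableSet_Ioi
            intro t ht
            have ht' : (0:ℝ) < t := lt_trans one_pos ht
            calc μW {a | t < a} ≤ μW (Set.Ici t) := measure_mono fun z hz => le_of_lt (show t < z from hz)
              _ = ENNReal.ofReal (μW.real (Set.Ici t)) := (ofReal_measureReal).symm
              _ ≤ _ := ENNReal.ofReal_le_ofReal (hCt t ht')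
        _ < ∞ := hi.lintegral_lt_top
  have : (1:ℝ) ≤ ∫ x, x ∂μW := by
    calc (1:ℝ) = ∫ x, (1:ℝ) ∂μW := by simp
      _ ≤ _ := integral_mono_ae (integrable_const _) hint hae
  unfold wMean; linarith

theorem tail_lower {τ c : ℝ} (hτ : 2 < τ) (μW : Measure ℝ) [IsProbabilityMeasure μW]
    (hW : WeightTail τ c μW) {ε t : ℝ} (hε : 0 < ε) (ht : ε < t) :
    ∃ c0, 0 < c0 ∧ ∀ᶠ x : ℝ in atTop, c0 * x ^ (1 - τ) ≤ μW.real (Set.Ioc (ε * x) (t * x)) := by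
  obtain ⟨hc, -, hlim⟩ := hW
  have key : ∀ s : ℝ, 0 < s → Tendsto (fun x : ℝ => μW.real (Set.Ioi (s * x)) / x ^ (1 - τ)) atTop
      (nhds (c * s ^ (1 - τ))) := by
    intro s hs
    have h1 := (hlim.comp (tendsto_id.const_mul_atTop hs)).const_mul (c * s ^ (1 - τ))
    rw [mul_one] at h1
    refine h1.congr' ?_
    filter_upwards [eventually_gt_atTop (0:ℝ)] with x hx
    have h2 : 0 < x ^ (1 - τ) := Real.rpow_pos_of_pos hx _
    have h3 : 0 < s ^ (1 - τ) := Real.rpow_pos_of_pos hs _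
    simp only [Function.comp, id]
    rw [Real.mul_rpow hs.le hx.le]
    rw [Measure.real]
    field_simp
  have hdiff := (key ε hε).sub (key t (hε.trans ht))
  have hpos : 0 < c * ε ^ (1 - τ) - c * t ^ (1 - τ) := by
    have := Real.rpow_lt_rpow_of_neg hε ht (show 1 - τ < 0 by linarith)
    nlinarith
  refine ⟨(c * ε ^ (1 - τ) - c * t ^ (1 - τ)) / 2, by linarith, ?_⟩
  filter_upwards [hdiff.eventually_const_le (half_lt_self hpos), eventually_gt_atTop (0:ℝ)] with x hx hx0
  have h2 : 0 < x ^ (1 - τ) := Real.rpow_pos_of_pos hx0 _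
  have h3 : ε * x ≤ t * x := by nlinarith
  have h4 : μW.real (Set.Ioc (ε * x) (t * x)) = μW.real (Set.Ioi (ε * x)) - μW.real (Set.Ioi (t * x)) := by
    rw [← Set.Ioi_sdiff_Ioi, measureReal_sdiff (Set.Ioi_subset_Ioi h3) measurableSet_Ioi]
  rw [h4]
  rw [← sub_div, le_div_iff₀ h2] at hx
  exact hx

end tails

section first
open scoped ENNReal

theorem ncard_eq_sum {T R : Type*} [Fintype T] [NonAssocSemiring R] (S : Set T) :
    ((S.ncard : ℕ) : R) = ∑ v, S.indicator (fun _ => (1:R)) v := by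
  classical
  rw [Set.ncard_eq_toFinset_card']
  simp only [Set.indicator_apply]
  rw [Finset.sum_boole]
  congr 2
  ext; simp

theorem markov_count {Ω T : Type*} [MeasurableSpace Ω] (P : Measure Ω) [Fintype T]
    (S : Ω → Set T) (B : T → Set Ω) (hSB : ∀ ω v, v ∈ S ω → ω ∈ B v) (b : ℝ)
    (hB : ∀ v, P (B v) ≤ ENNReal.ofReal b) (θ : ℝ) (hθ : 0 < θ) :
    P {ω | θ ≤ ((S ω).ncard : ℝ)} ≤ ENNReal.ofReal (Fintype.card T * b / θ) := by
  classical
  set f : Ω → ℝ≥0∞ := fun ω => ∑ v, (toMeasurable P (B v)).indicator 1 ω with hf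
  have hfm : Measurable f := by
    apply Finset.measurable_fun_sum
    intro v _
    exact measurable_one.indicator (measurableSet_toMeasurable _ _)
  have hle : ∀ ω, (((S ω).ncard : ℕ) : ℝ≥0∞) ≤ f ω := by
    intro ω
    rw [ncard_eq_sum]
    refine Finset.sum_le_sum fun v _ => ?_
    by_cases h : v ∈ S ω
    · rw [Set.indicator_of_mem h, Set.indicator_of_mem (subset_toMeasurable _ _ (hSB ω v h))]
      rfl
    · rw [Set.indicator_of_notMem h]; exact zero_le
  have hint : ∫⁻ ω, f ω ∂P ≤ Fintype.card T * ENNReal.ofReal b := by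
    rw [hf, lintegral_finsetSum _ (fun v _ => measurable_one.indicator (measurableSet_toMeasurable _ _))]
    calc _ ≤ ∑ v : T, ENNReal.ofReal b := by
          refine Finset.sum_le_sum fun v _ => ?_
          rw [lintegral_indicator_one (measurableSet_toMeasurable _ _), measure_toMeasurable]
          exact hB v
      _ = _ := by simp
  have hM := mul_meas_ge_le_lintegral (μ := P) hfm (ENNReal.ofReal θ)
  have hsub : P {ω | θ ≤ ((S ω).ncard : ℝ)} ≤ P {ω | ENNReal.ofReal θ ≤ f ω} := by
    apply measure_mono
    intro ω hω
    have hω' : θ ≤ ((S ω).ncard : ℝ) := hω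
    show ENNReal.ofReal θ ≤ f ω
    refine le_trans ?_ (hle ω)
    rw [← ENNReal.ofReal_natCast]
    exact ENNReal.ofReal_le_ofReal hω'
  refine hsub.trans ?_
  rw [ENNReal.ofReal_div_of_pos hθ, ENNReal.ofReal_mul (by positivity), ENNReal.ofReal_natCast]
  rw [ENNReal.le_div_iff_mul_le (Or.inl (by simpa using hθ)) (Or.inl ENNReal.ofReal_ne_top), mul_comm]
  exact hM.trans hint

theorem connProb_symm (γ μbar : ℝ) (d n : ℕ) (w : Fin n → ℝ) (x : Fin n → Torus d)
    (u v : Fin n) : connProb γ μbar d n w x u v = connProb γ μbar d n w x v u := by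
  unfold connProb; rw [mul_comm (w u), dist_comm]

theorem girgEdge_symm (γ μbar : ℝ) (d n : ℕ) (ω : GirgΩ d n) (u v : Fin n) :
    girgEdge γ μbar d n ω u v ↔ girgEdge γ μbar d n ω v u := by
  unfold girgEdge; rw [connProb_symm, Sym2.eq_swap, ne_comm]

theorem nInd_le_nSub {k : ℕ} (H : SimpleGraph (Fin k)) (γ μbar ε : ℝ) (α : Fin k → ℝ)
    (β : Fin k → Fin k → ℝ) (d n : ℕ) (ω : GirgΩ d n) :
    nIndM H γ μbar ε α β d n ω ≤ nSubM H γ μbar ε α β d n ω := by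
  apply Set.ncard_le_ncard _ (Set.toFinite _)
  rintro v ⟨h1, h2⟩
  exact ⟨h1, fun i j hij => (h2 i j hij.ne).1 hij⟩

theorem ratio_upper {ε μbar a b wu wv dd n : ℝ} {x : ℝ} {d : ℕ} (hε : 0 < ε) (hμ : 0 < μbar) (hn : 0 < n)
    (hu : wu ∈ windowIcc ε (n ^ a)) (hv : wv ∈ windowIcc ε (n ^ b))
    (hx : dd ∈ windowIcc ε (n ^ x)) :
    0 ≤ wu * wv / (n * μbar * dd ^ d) ∧
    wu * wv / (n * μbar * dd ^ d) ≤ (ε⁻¹) ^ 2 * (ε⁻¹) ^ d * μbar⁻¹ * n ^ (a + b - d * x - 1) := by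
  have ha : 0 < n ^ a := Real.rpow_pos_of_pos hn _
  have hb : 0 < n ^ b := Real.rpow_pos_of_pos hn _
  have hxx : 0 < n ^ x := Real.rpow_pos_of_pos hn _
  have hdd : 0 < dd := lt_of_lt_of_le (by positivity) hx.1
  have hu0 : 0 < wu := lt_of_lt_of_le (by positivity) hu.1
  have hv0 : 0 < wv := lt_of_lt_of_le (by positivity) hv.1
  refine ⟨by positivity, ?_⟩
  have h1 : wu * wv / (n * μbar * dd ^ d) ≤ (n ^ a / ε) * (n ^ b / ε) / (n * μbar * (ε * n ^ x) ^ d) := by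
    apply div_le_div₀ (by positivity) (mul_le_mul hu.2 hv.2 hv0.le (by positivity)) (by positivity)
    gcongr
    exact hx.1
  refine h1.trans (le_of_eq ?_)
  rw [Real.rpow_sub hn, Real.rpow_sub hn, Real.rpow_add hn, Real.rpow_one,
    mul_comm (d:ℝ) x, Real.rpow_mul hn.le, Real.rpow_natCast, mul_pow, inv_pow, inv_pow]
  field_simp

theorem minBeta_spec {k : ℕ} (β : Fin k → Fin k → ℝ) (j : Fin k) (h : 0 < j.val) :
    ∃ i, i < j ∧ β i j = minBeta β j := by
  have hfin : {x : ℝ | ∃ i, i < j ∧ x = β i j}.Finite := by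
    apply (Set.finite_range (fun i => β i j)).subset
    rintro x ⟨i, -, rfl⟩; exact ⟨i, rfl⟩
  have hne : {x : ℝ | ∃ i, i < j ∧ x = β i j}.Nonempty :=
    ⟨β ⟨0, j.pos⟩ j, ⟨0, j.pos⟩, by simpa [Fin.lt_def] using h, rfl⟩
  obtain ⟨i, hi, hx⟩ := hne.csInf_mem hfin
  exact ⟨i, hi, hx.symm⟩

theorem minBeta_zero {k : ℕ} (β : Fin k → Fin k → ℝ) (j : Fin k) (h : j.val = 0) :
    minBeta β j = 0 := by
  have : {x : ℝ | ∃ i, i < j ∧ x = β i j} = ∅ := by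
    ext x; simp only [Set.mem_ofPred_eq, Set.mem_empty_iff_false, iff_false]
    rintro ⟨i, hi, -⟩
    rw [Fin.lt_def] at hi; omega
  rw [minBeta, this]; simp

theorem pair_injOn {k n : ℕ} (v : Fin k → Fin n) (hv : Function.Injective v) :
    Set.InjOn (fun p : Fin k × Fin k => s(v p.1, v p.2)) {p | p.1 < p.2} := by
  rintro ⟨a, b⟩ hab ⟨a', b'⟩ hab' h
  have hab : a < b := hab
  have hab' : a' < b' := hab'
  simp only [Sym2.eq_iff] at h
  rcases h with ⟨h1, h2⟩ | ⟨h1, h2⟩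
  · rw [hv h1, hv h2]
  · have h1 := hv h1; have h2 := hv h2; subst h1; subst h2
    exact absurd hab (not_lt.2 hab'.le)

open scoped Classical in
theorem first_moment {k d : ℕ} (τ γ c : ℝ) (hτ : 2 < τ) (hγ : 1 < γ)
    (μW : Measure ℝ) [IsProbabilityMeasure μW] (hW : WeightTail τ c μW)
    (H : SimpleGraph (Fin k)) (α : Fin k → ℝ) (β : Fin k → Fin k → ℝ)
    (ε : ℝ) (hε : 0 < ε) :
    ∃ C, 0 < C ∧ ∀ n : ℕ, 1 ≤ n → ∀ θ : ℝ, 0 < θ →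
      girgMeasure μW d n {ω | θ ≤ (nSubM H γ (wMean μW) ε α β d n ω : ℝ)} ≤
        ENNReal.ofReal (C * (n:ℝ) ^ (fExp τ γ d H α β) / θ) := by
  obtain ⟨Ct, hCt, htail⟩ := tail_upper hτ μW hW
  have hμ := wMean_pos hτ μW hW
  set μbar := wMean μW with hμbar
  set E : Finset (Fin k × Fin k) :=
    Finset.univ.filter (fun p : Fin k × Fin k => p.1 < p.2 ∧ H.Adj p.1 p.2) with hE
  set J : Finset (Fin k) := Finset.univ.filter (fun j => 0 < j.val) with hJ
  set K : ℝ := (ε⁻¹) ^ 2 * (ε⁻¹) ^ d * μbar⁻¹ with hK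
  have hKp : 0 < K := by positivity
  have hpar : ∀ j : Fin k, ∃ i, 0 < j.val → i < j ∧ β i j = minBeta β j := by
    intro j
    by_cases h : 0 < j.val
    · obtain ⟨i, hi⟩ := minBeta_spec β j h; exact ⟨i, fun _ => hi⟩
    · exact ⟨j, fun h' => absurd h' h⟩
  choose par hpar using hpar
  set C1 : ℝ := Ct * ε ^ (1 - τ) with hC1
  set C2 : ℝ := (2 / ε) ^ d with hC2
  set C3 : ℝ := max 1 (K ^ γ) with hC3
  have hC1p : 0 < C1 := by positivity
  have hC2p : 0 < C2 := by positivity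
  have hC3p : 0 < C3 := by positivity
  refine ⟨C1 ^ k * C2 ^ J.card * C3 ^ E.card, by positivity, ?_⟩
  intro n hn θ hθ
  have hn0 : (0:ℝ) < n := by exact_mod_cast hn
  have hn1 : (1:ℝ) ≤ n := by exact_mod_cast hn
  set xp : Fin k × Fin k → ℝ := fun p => α p.1 + α p.2 - d * β p.1 p.2 - 1 with hxp
  set b : ℝ := (∏ i : Fin k, C1 * (n:ℝ) ^ ((1 - τ) * α i)) * ((∏ j ∈ J, C2 * (n:ℝ) ^ (d * minBeta β j)) *
    ∏ p ∈ E, C3 * (n:ℝ) ^ (γ * min (xp p) 0)) with hb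
  let B : (Fin k → Fin n) → Set (GirgΩ d n) := fun v => {ω | Function.Injective v ∧
    ω ∈ {ω : GirgΩ d n | ω.1 ∈ {w : Fin n → ℝ | ∀ i ∈ (Finset.univ : Finset (Fin k)), w (v i) ∈ windowIcc ε ((n : ℝ) ^ (α i))} ∧
    ω.2.1 ∈ {x : Fin n → Torus d | ∀ j ∈ J, dist (x (v j)) (x (v (par j)) + 0) ≤ (n:ℝ) ^ (minBeta β j) / ε} ∧
    ω.2.2 ∈ {y : Sym2 (Fin n) → ℝ | ∀ p ∈ E, y s(v p.1, v p.2) ∈ Set.Iic ((K * (n:ℝ) ^ (xp p)) ^ γ)}}}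
  have hmain := markov_count (girgMeasure μW d n)
    (fun ω => {v : Fin k → Fin n | v ∈ Mset ε α β d n ω.1 ω.2.1 ∧
      ∀ i j : Fin k, H.Adj i j → girgEdge γ μbar d n ω (v i) (v j)}) B ?_ b ?_ θ hθ
  · refine hmain.trans (ENNReal.ofReal_le_ofReal (le_of_eq ?_))
    congr 1
    simp only [Fintype.card_fun, Fintype.card_fin, hb, Finset.prod_mul_distrib, Finset.prod_const,
      Finset.card_univ]
    have e1 : ∏ x : Fin k, (n:ℝ) ^ ((1 - τ) * α x) = (n:ℝ) ^ ((1 - τ) * ∑ i, α i) := by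
      rw [Finset.mul_sum, Real.rpow_sum_of_pos hn0]
    have e2 : ∏ x ∈ J, (n:ℝ) ^ (d * minBeta β x) = (n:ℝ) ^ (d * ∑ j, minBeta β j) := by
      rw [← Real.rpow_sum_of_pos hn0, ← Finset.mul_sum]
      congr 2
      apply Finset.sum_subset (Finset.subset_univ _)
      intro j _ hj
      apply minBeta_zero
      simpa [hJ] using hj
    have e3 : ∏ x ∈ E, (n:ℝ) ^ (γ * min (xp x) 0) = (n:ℝ) ^ (γ * ∑ p ∈ E, min (xp p) 0) := by
      rw [← Real.rpow_sum_of_pos hn0, ← Finset.mul_sum]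
    rw [e1, e2, e3, fExp, Real.rpow_add hn0, Real.rpow_add hn0, Real.rpow_add hn0, Real.rpow_natCast]
    push_cast
    ring
  · rintro ω v ⟨⟨hinj, hw, hx⟩, hedge⟩
    refine ⟨hinj, fun i _ => hw i, fun j hj => ?_, fun p hp => ?_⟩
    · have hj' : 0 < j.val := by simpa [hJ] using hj
      obtain ⟨h1, h2⟩ := hpar j hj'
      have := (hx _ _ h1).2
      rw [h2] at this
      rw [add_zero, dist_comm]; exact this
    · have hp' : p.1 < p.2 ∧ H.Adj p.1 p.2 := by simpa [hE] using hp
      have h1 := (hedge _ _ hp'.2).2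
      refine h1.trans ((min_le_right _ _).trans ?_)
      have h2 := ratio_upper (d := d) hε hμ hn0 (hw p.1) (hw p.2) (hx _ _ hp'.1)
      exact Real.rpow_le_rpow h2.1 h2.2 (by linarith)
  · intro v
    by_cases hv : Function.Injective v
    swap
    · have : B v = ∅ := by ext ω; simp [B, hv]
      rw [this]; simp
    have hBv : B v = {ω : GirgΩ d n | ω.1 ∈ {w : Fin n → ℝ | ∀ i ∈ (Finset.univ : Finset (Fin k)), w (v i) ∈ windowIcc ε ((n : ℝ) ^ (α i))} ∧
      ω.2.1 ∈ {x : Fin n → Torus d | ∀ j ∈ J, dist (x (v j)) (x (v (par j)) + 0) ≤ (n:ℝ) ^ (minBeta β j) / ε} ∧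
      ω.2.2 ∈ {y : Sym2 (Fin n) → ℝ | ∀ p ∈ E, y s(v p.1, v p.2) ∈ Set.Iic ((K * (n:ℝ) ^ (xp p)) ^ γ)}} := by
      ext ω; simp only [B, Set.mem_ofPred_eq, hv, true_and]
    rw [hBv, girg_prod]
    rw [pi_box μW v (fun i => windowIcc ε ((n : ℝ) ^ (α i))) (fun i => measurableSet_Icc) Finset.univ hv.injOn]
    rw [pi_balls v (fun j => j.val) par (fun _ => 0) (fun j => (n:ℝ) ^ (minBeta β j) / ε) J
      (fun i _ => by positivity) hv.injOn
      (by
        intro i hi j hj hij h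
        have hi' : 0 < i.val := by simpa [hJ] using hi
        have h1 := (hpar i hi').1
        rw [hv h, Fin.lt_def] at h1
        omega)]
    rw [pi_box coinM (fun p : Fin k × Fin k => s(v p.1, v p.2))
      (fun p => Set.Iic ((K * (n:ℝ) ^ (xp p)) ^ γ)) (fun i => measurableSet_Iic) E
      ((pair_injOn v hv).mono (by intro p hp; have : p.1 < p.2 ∧ H.Adj p.1 p.2 := by simpa [hE] using hp
                                  exact this.1))]
    rw [hb, ENNReal.ofReal_mul (by positivity), ENNReal.ofReal_mul (by positivity),
      ENNReal.ofReal_prod_of_nonneg (fun _ _ => by positivity),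
      ENNReal.ofReal_prod_of_nonneg (fun _ _ => by positivity),
      ENNReal.ofReal_prod_of_nonneg (fun _ _ => by positivity)]
    gcongr with i hi j hj p hp
    · rw [← ofReal_measureReal]
      apply ENNReal.ofReal_le_ofReal
      calc μW.real (windowIcc ε ((n:ℝ) ^ α i)) ≤ μW.real (Set.Ici (ε * (n:ℝ) ^ α i)) :=
            measureReal_mono (fun z hz => hz.1) (measure_ne_top _ _)
        _ ≤ Ct * (ε * (n:ℝ) ^ α i) ^ (1 - τ) := htail _ (by positivity)
        _ = _ := by
          rw [Real.mul_rpow hε.le (by positivity), ← Real.rpow_mul hn0.le, mul_comm (α i), hC1, mul_assoc]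
    · calc (min 1 (2 * ((n:ℝ) ^ minBeta β j / ε))) ^ d ≤ (2 * ((n:ℝ) ^ minBeta β j / ε)) ^ d := by
            apply pow_le_pow_left₀ (by positivity) (min_le_right _ _)
        _ = _ := by
          rw [hC2, mul_comm (d:ℝ), Real.rpow_mul hn0.le, Real.rpow_natCast, ← mul_pow]
          congr 1; ring
    · rw [coin_Iic (by positivity)]
      apply ENNReal.ofReal_le_ofReal
      by_cases h : xp p ≤ 0
      · rw [min_eq_left h]
        calc min ((K * (n:ℝ) ^ xp p) ^ γ) 1 ≤ (K * (n:ℝ) ^ xp p) ^ γ := min_le_left _ _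
          _ = K ^ γ * (n:ℝ) ^ (γ * xp p) := by
            rw [Real.mul_rpow hKp.le (by positivity), ← Real.rpow_mul hn0.le, mul_comm γ]
          _ ≤ _ := by gcongr; exact le_max_right _ _
      · rw [show min (xp p) 0 = 0 from min_eq_right (not_le.1 h).le]
        simp only [mul_zero, Real.rpow_zero, mul_one]
        exact (min_le_right _ _).trans (le_max_left _ _)

end first

section pairs
open scoped ENNReal

/-- index pairs -/
def prs (k : ℕ) : Finset (Fin k × Fin k) := Finset.univ.filter (fun p => p.1 < p.2)

/-- the product-form good event for a tuple -/
def Aev {k d n : ℕ} [NeZero k] (W : Set ℝ) (y : Fin k → Torus d) (r : ℝ)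
    (Bc : Fin k × Fin k → Set ℝ) (v : Fin k → Fin n) : Set (GirgΩ d n) :=
  {ω | ω.1 ∈ {w : Fin n → ℝ | ∀ i ∈ (Finset.univ : Finset (Fin k)), w (v i) ∈ W} ∧
    ω.2.1 ∈ {x : Fin n → Torus d | ∀ j ∈ (Finset.univ : Finset (Fin k)).erase 0,
      dist (x (v j)) (x (v 0) + y j) ≤ r} ∧
    ω.2.2 ∈ {c : Sym2 (Fin n) → ℝ | ∀ p ∈ prs k, c s(v p.1, v p.2) ∈ Bc p}}

theorem Aev_meas {k d n : ℕ} [NeZero k] {W : Set ℝ} (hW : MeasurableSet W) (y : Fin k → Torus d)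
    (r : ℝ) {Bc : Fin k × Fin k → Set ℝ} (hB : ∀ p, MeasurableSet (Bc p)) (v : Fin k → Fin n) :
    MeasurableSet (Aev W y r Bc v) := by
  have h1 : MeasurableSet {w : Fin n → ℝ | ∀ i ∈ (Finset.univ : Finset (Fin k)), w (v i) ∈ W} := by
    have : {w : Fin n → ℝ | ∀ i ∈ (Finset.univ : Finset (Fin k)), w (v i) ∈ W} =
        ⋂ i ∈ (Finset.univ : Finset (Fin k)), {w : Fin n → ℝ | w (v i) ∈ W} := by ext; simp
    rw [this]
    exact Finset.measurableSet_biInter _ fun i _ => (measurable_pi_apply (v i)) hW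
  have h2 : MeasurableSet {x : Fin n → Torus d | ∀ j ∈ (Finset.univ : Finset (Fin k)).erase 0,
      dist (x (v j)) (x (v 0) + y j) ≤ r} := by
    have : {x : Fin n → Torus d | ∀ j ∈ (Finset.univ : Finset (Fin k)).erase 0,
      dist (x (v j)) (x (v 0) + y j) ≤ r} = ⋂ j ∈ (Finset.univ : Finset (Fin k)).erase 0,
       {x : Fin n → Torus d | dist (x (v j)) (x (v 0) + y j) ≤ r} := by ext; simp
    rw [this]
    refine Finset.measurableSet_biInter _ fun i _ => ?_
    apply measurableSet_le _ measurable_const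
    apply Continuous.measurable
    fun_prop
  have h3 : MeasurableSet {c : Sym2 (Fin n) → ℝ | ∀ p ∈ prs k, c s(v p.1, v p.2) ∈ Bc p} := by
    have : {c : Sym2 (Fin n) → ℝ | ∀ p ∈ prs k, c s(v p.1, v p.2) ∈ Bc p} =
        ⋂ p ∈ prs k, {c : Sym2 (Fin n) → ℝ | c s(v p.1, v p.2) ∈ Bc p} := by ext; simp
    rw [this]
    exact Finset.measurableSet_biInter _ fun i _ => (measurable_pi_apply _) (hB i)
  exact (measurable_fst h1).inter (((measurable_fst.comp measurable_snd) h2).inter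
    ((measurable_snd.comp measurable_snd) h3))

theorem Aev_single {k d n : ℕ} [NeZero k] (μW : Measure ℝ) [IsProbabilityMeasure μW]
    {W : Set ℝ} (hW : MeasurableSet W) (y : Fin k → Torus d)
    (r : ℝ) (hr : 0 ≤ r) {Bc : Fin k × Fin k → Set ℝ} (hB : ∀ p, MeasurableSet (Bc p))
    (v : Fin k → Fin n) (hv : Function.Injective v) :
    girgMeasure μW d n (Aev W y r Bc v) =
      μW W ^ k * (ENNReal.ofReal ((min 1 (2 * r)) ^ d) ^ (k - 1) * ∏ p ∈ prs k, coinM (Bc p)) := by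
  rw [Aev, girg_prod, pi_box μW v (fun _ => W) (fun _ => hW) Finset.univ hv.injOn,
    pi_balls v (fun j => j.val) (fun _ => 0) y (fun _ => r) (Finset.univ.erase 0)
      (fun _ _ => hr) hv.injOn
      (by intro i _ j hj _ h
          have := hv h
          exact (Finset.ne_of_mem_erase hj) this.symm),
    pi_box coinM (fun p : Fin k × Fin k => s(v p.1, v p.2)) Bc hB (prs k)
      ((pair_injOn v hv).mono (by intro p hp; simpa [prs] using hp))]
  simp [Finset.card_erase_of_mem]

theorem Aev_pair {k d n : ℕ} [NeZero k] (μW : Measure ℝ) [IsProbabilityMeasure μW]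
    {W : Set ℝ} (hW : MeasurableSet W) (y : Fin k → Torus d)
    (r : ℝ) (hr : 0 ≤ r) {Bc : Fin k × Fin k → Set ℝ} (hB : ∀ p, MeasurableSet (Bc p))
    (v v' : Fin k → Fin n) (hv : Function.Injective v) (hv' : Function.Injective v')
    (hdis : ∀ i j, v i ≠ v' j) :
    girgMeasure μW d n (Aev W y r Bc v ∩ Aev W y r Bc v') =
      girgMeasure μW d n (Aev W y r Bc v) * girgMeasure μW d n (Aev W y r Bc v') := by
  rw [Aev_single μW hW y r hr hB v hv, Aev_single μW hW y r hr hB v' hv']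
  have hinj : Function.Injective (Sum.elim v v') := hv.sumElim hv' hdis
  have heq : Aev W y r Bc v ∩ Aev W y r Bc v' =
      {ω : GirgΩ d n | ω.1 ∈ {w : Fin n → ℝ | ∀ i ∈ (Finset.univ : Finset (Fin k ⊕ Fin k)), w (Sum.elim v v' i) ∈ W} ∧
    ω.2.1 ∈ {x : Fin n → Torus d | ∀ j ∈ ((Finset.univ : Finset (Fin k)).erase 0).disjSum ((Finset.univ : Finset (Fin k)).erase 0),
      dist (x (Sum.elim v v' j)) (x (Sum.elim v v' (Sum.elim (fun _ => Sum.inl 0) (fun _ => Sum.inr 0) j)) + Sum.elim y y j) ≤ r} ∧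
    ω.2.2 ∈ {c : Sym2 (Fin n) → ℝ | ∀ p ∈ (prs k).disjSum (prs k),
      c (Sum.elim (fun p : Fin k × Fin k => s(v p.1, v p.2)) (fun p : Fin k × Fin k => s(v' p.1, v' p.2)) p) ∈ Sum.elim Bc Bc p}} := by
    ext ω
    simp only [Aev, Set.mem_inter_iff, Set.mem_ofPred_eq, Finset.mem_univ, forall_true_left,
      Sum.forall, Sum.elim_inl, Sum.elim_inr, Finset.inl_mem_disjSum, Finset.inr_mem_disjSum]
    tauto
  rw [heq, girg_prod, pi_box μW (Sum.elim v v') (fun _ => W) (fun _ => hW) Finset.univ hinj.injOn,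
    pi_balls (Sum.elim v v') (fun _ => 0) (Sum.elim (fun _ => Sum.inl 0) (fun _ => Sum.inr 0))
      (Sum.elim y y) (fun _ => r) _ (fun _ _ => hr) hinj.injOn
      (by
        intro i _ j hj _ h
        have := hinj h
        rcases i with i | i <;> rcases j with j | j <;>
          simp_all),
    pi_box coinM (Sum.elim (fun p : Fin k × Fin k => s(v p.1, v p.2)) (fun p : Fin k × Fin k => s(v' p.1, v' p.2)))
      (Sum.elim Bc Bc) (by rintro (p | p) <;> exact hB p) _ ?_]
  · simp only [Finset.prod_disjSum, Finset.prod_const, Finset.card_disjSum, Finset.card_univ, Fintype.card_sum, Fintype.card_fin,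
      Finset.card_erase_of_mem (Finset.mem_univ _), Sum.elim_inl, Sum.elim_inr]
    ring
  · rintro (p | p) hp (q | q) hq h
    · simp only [Finset.mem_coe, Finset.inl_mem_disjSum] at hp hq
      rw [(pair_injOn v hv) (by simpa [prs] using hp) (by simpa [prs] using hq) h]
    · simp only [Sum.elim_inl, Sum.elim_inr, Sym2.eq_iff] at h
      rcases h with ⟨h, -⟩ | ⟨h, -⟩ <;> exact absurd h (hdis _ _)
    · simp only [Sum.elim_inl, Sum.elim_inr, Sym2.eq_iff] at h
      rcases h with ⟨h, -⟩ | ⟨h, -⟩ <;> exact absurd h.symm (hdis _ _)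
    · simp only [Finset.mem_coe, Finset.inr_mem_disjSum] at hp hq
      rw [(pair_injOn v' hv') (by simpa [prs] using hp) (by simpa [prs] using hq) h]

/-- indices of `v'` not hit by `v` -/
def newIdx {k n : ℕ} (v v' : Fin k → Fin n) : Finset (Fin k) :=
  Finset.univ.filter (fun j => ∀ i, v i ≠ v' j)

theorem Aev_overlap {k d n : ℕ} [NeZero k] (μW : Measure ℝ) [IsProbabilityMeasure μW]
    {W : Set ℝ} (hW : MeasurableSet W) (y : Fin k → Torus d)
    (r : ℝ) (hr : 0 ≤ r) (Bc : Fin k × Fin k → Set ℝ) 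
    (R : ℝ) (hR : ∀ j, ‖y j‖ + r ≤ R)
    (v v' : Fin k → Fin n) (hv : Function.Injective v) (hv' : Function.Injective v')
    (hover : newIdx v v' ≠ Finset.univ) :
    girgMeasure μW d n (Aev W y r Bc v ∩ Aev W y r Bc v') ≤
      μW W ^ (k + (newIdx v v').card) *
        ENNReal.ofReal ((6 * R) ^ d) ^ (k - 1 + (newIdx v v').card) := by
  have hR0 : 0 ≤ R := le_trans (by positivity) (hR 0)
  set S := newIdx v v' with hS
  obtain ⟨j0, hj0⟩ : ∃ j0, j0 ∉ S := by
    by_contra h; push Not at h; exact hover (Finset.eq_univ_iff_forall.2 h)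
  obtain ⟨i0, hi0⟩ : ∃ i0, v i0 = v' j0 := by simpa [hS, newIdx] using hj0
  have hmemS : ∀ j, j ∈ S ↔ ∀ i, v i ≠ v' j := by intro j; simp [hS, newIdx]
  have hinj : Set.InjOn (Sum.elim v v') (((Finset.univ : Finset (Fin k)).disjSum S : Finset _) : Set (Fin k ⊕ Fin k)) := by
    rintro (p | p) hp (q | q) hq h
    · rw [hv h]
    · exact absurd h ((hmemS q).1 (by simpa using hq) p)
    · exact absurd h.symm ((hmemS p).1 (by simpa using hp) q)
    · rw [hv' h]
  have hsub : Aev W y r Bc v ∩ Aev W y r Bc v' ⊆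
      {ω : GirgΩ d n | ω.1 ∈ {w : Fin n → ℝ | ∀ i ∈ (Finset.univ : Finset (Fin k)).disjSum S, w (Sum.elim v v' i) ∈ W} ∧
    ω.2.1 ∈ {x : Fin n → Torus d | ∀ j ∈ ((Finset.univ : Finset (Fin k)).erase 0).disjSum S,
      dist (x (Sum.elim v v' j)) (x (Sum.elim v v' (Sum.inl 0)) + 0) ≤ 3 * R} ∧
    ω.2.2 ∈ (Set.univ : Set (Sym2 (Fin n) → ℝ))} := by
    rintro ω ⟨⟨h1, h2, -⟩, ⟨h1', h2', -⟩⟩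
    simp only [Set.mem_ofPred_eq, Finset.mem_univ, forall_true_left, Finset.mem_erase, and_true] at h1 h2 h1' h2'
    have hb : ∀ j, dist (ω.2.1 (v j)) (ω.2.1 (v 0)) ≤ R := by
      intro j
      by_cases hj : j = 0
      · rw [hj, dist_self]; exact hR0
      · have := dist_triangle (ω.2.1 (v j)) (ω.2.1 (v 0) + y j) (ω.2.1 (v 0))
        rw [dist_self_add_left] at this
        have a1 := h2 j hj
        have a2 := hR j
        linarith
    have hb' : ∀ j, dist (ω.2.1 (v' j)) (ω.2.1 (v' 0)) ≤ R := by
      intro j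
      by_cases hj : j = 0
      · rw [hj, dist_self]; exact hR0
      · have := dist_triangle (ω.2.1 (v' j)) (ω.2.1 (v' 0) + y j) (ω.2.1 (v' 0))
        rw [dist_self_add_left] at this
        have a1 := h2' j hj
        have a2 := hR j
        linarith
    refine ⟨?_, ?_, trivial⟩
    · rintro (i | i) _
      · exact h1 i
      · exact h1' i
    · rintro (j | j) _
      · simp only [Sum.elim_inl, add_zero]
        have := hb j; linarith
      · simp only [Sum.elim_inl, Sum.elim_inr, add_zero]
        have b1 := hb' j
        have b2 := hb' j0
        have b3 := hb i0
        rw [hi0] at b3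
        have t1 := dist_triangle (ω.2.1 (v' j)) (ω.2.1 (v' 0)) (ω.2.1 (v 0))
        have t2 := dist_triangle (ω.2.1 (v' 0)) (ω.2.1 (v' j0)) (ω.2.1 (v 0))
        rw [dist_comm (ω.2.1 (v' 0)) (ω.2.1 (v' j0))] at t2
        linarith
  refine (measure_mono hsub).trans ?_
  rw [girg_prod, pi_box μW (Sum.elim v v') (fun _ => W) (fun _ => hW) _ hinj,
    pi_balls (Sum.elim v v') (fun _ => 0) (fun _ => Sum.inl 0)
      (fun _ => 0) (fun _ => 3 * R) _ (fun _ _ => by positivity)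
      (hinj.mono (by
        intro i hi
        rcases i with i | i <;> simp_all))
      (by
        intro i _ j hj _ h
        rcases j with j | j
        · simp only [Sum.elim_inl] at h
          simp [hv h] at hj
        · simp only [Sum.elim_inl, Sum.elim_inr] at h
          exact (hmemS j).1 (by simpa using hj) 0 h)]
  simp only [measure_univ, mul_one, Finset.prod_const, Finset.card_disjSum, Finset.card_univ, Fintype.card_fin,
      Finset.card_erase_of_mem (Finset.mem_univ _)]
  gcongr
  calc min 1 (2 * (3 * R)) ≤ 2 * (3 * R) := min_le_right _ _
    _ = 6 * R := by ring

theorem count_overlap {k n : ℕ} (I : Finset (Fin k → Fin n))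
    (F : (Fin k → Fin n) → (Fin k → Fin n) → ℝ) (g : ℕ → ℝ) (hg : ∀ s, 0 ≤ g s)
    (hF : ∀ v ∈ I, ∀ v' ∈ I, newIdx v v' ≠ Finset.univ → F v v' ≤ g (newIdx v v').card) :
    ∑ v ∈ I, ∑ v' ∈ I, (if newIdx v v' ≠ Finset.univ then F v v' else 0) ≤
      ∑ S ∈ (Finset.univ : Finset (Finset (Fin k))).erase Finset.univ,
        (n:ℝ) ^ k * ((n:ℝ) ^ S.card * (k:ℝ) ^ (k - S.card)) * g S.card := by
  classical
  have step1 : ∀ v ∈ I, ∑ v' ∈ I, (if newIdx v v' ≠ Finset.univ then F v v' else 0) ≤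
      ∑ S ∈ (Finset.univ : Finset (Finset (Fin k))).erase Finset.univ,
        ((n:ℝ) ^ S.card * (k:ℝ) ^ (k - S.card)) * g S.card := by
    intro v hv
    calc ∑ v' ∈ I, (if newIdx v v' ≠ Finset.univ then F v v' else 0)
        ≤ ∑ v' ∈ I, ∑ S ∈ (Finset.univ : Finset (Finset (Fin k))).erase Finset.univ,
          (if newIdx v v' = S then g S.card else 0) := by
          refine Finset.sum_le_sum fun v' hv' => ?_
          rw [Finset.sum_ite_eq]
          by_cases h : newIdx v v' = Finset.univ
          · simp [h]
          · simp [h]; exact hF v hv v' hv' h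
      _ = ∑ S ∈ (Finset.univ : Finset (Finset (Fin k))).erase Finset.univ, ∑ v' ∈ I,
          (if newIdx v v' = S then g S.card else 0) := Finset.sum_comm
      _ ≤ _ := by
          refine Finset.sum_le_sum fun S _ => ?_
          rw [← Finset.sum_filter, Finset.sum_const, nsmul_eq_mul]
          refine mul_le_mul_of_nonneg_right ?_ (hg _)
          have hsub : I.filter (fun v' => newIdx v v' = S) ⊆
              Fintype.piFinset (fun j => if j ∈ S then (Finset.univ : Finset (Fin n)) else Finset.univ.image v) := by
            intro v' hv'
            rw [Fintype.mem_piFinset]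
            intro j
            have h := (Finset.mem_filter.1 hv').2
            split_ifs with hj
            · simp
            · rw [← h] at hj
              simpa [newIdx] using hj
          have hc := Finset.card_le_card hsub
          rw [Fintype.card_piFinset] at hc
          have hc2 : ∏ j : Fin k, (if j ∈ S then (Finset.univ : Finset (Fin n)) else Finset.univ.image v).card
              ≤ ∏ j : Fin k, (if j ∈ S then n else k) := by
            refine Finset.prod_le_prod' fun j _ => ?_
            split_ifs
            · simp
            · exact Finset.card_image_le.trans (by simp)
          have hc3 : ∏ j : Fin k, (if j ∈ S then n else k) = n ^ S.card * k ^ (k - S.card) := by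
            rw [Finset.prod_ite]
            simp only [Finset.prod_const]
            congr 2
            · congr 1; ext; simp
            · have : (Finset.univ.filter (fun j => j ∉ S)) = Sᶜ := by ext; simp
              rw [this, Finset.card_compl, Fintype.card_fin]
          rw [hc3] at hc2
          exact_mod_cast hc.trans hc2
  calc _ ≤ ∑ v ∈ I, ∑ S ∈ (Finset.univ : Finset (Finset (Fin k))).erase Finset.univ,
        ((n:ℝ) ^ S.card * (k:ℝ) ^ (k - S.card)) * g S.card := Finset.sum_le_sum step1
    _ = (I.card : ℝ) * ∑ S ∈ (Finset.univ : Finset (Finset (Fin k))).erase Finset.univ,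
        ((n:ℝ) ^ S.card * (k:ℝ) ^ (k - S.card)) * g S.card := by
        rw [Finset.sum_const, nsmul_eq_mul]
    _ ≤ (n:ℝ) ^ k * ∑ S ∈ (Finset.univ : Finset (Finset (Fin k))).erase Finset.univ,
        ((n:ℝ) ^ S.card * (k:ℝ) ^ (k - S.card)) * g S.card := by
        refine mul_le_mul_of_nonneg_right ?_ (Finset.sum_nonneg fun S _ => mul_nonneg (by positivity) (hg _))
        have := Finset.card_le_univ I
        rw [Fintype.card_fun, Fintype.card_fin, Fintype.card_fin] at this
        exact_mod_cast this
    _ = _ := by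
        rw [Finset.mul_sum]
        exact Finset.sum_congr rfl fun S _ => by ring

end pairs

section lower
open scoped ENNReal

/-- tuples counted by `starNM` -/
def starSet (s : StarKind) {k : ℕ} (H : SimpleGraph (Fin k)) (γ μbar ε : ℝ) (α : Fin k → ℝ)
    (β : Fin k → Fin k → ℝ) (d n : ℕ) (ω : GirgΩ d n) : Set (Fin k → Fin n) :=
  match s with
  | .sub => {v : Fin k → Fin n | v ∈ Mset ε α β d n ω.1 ω.2.1 ∧
    ∀ i j : Fin k, H.Adj i j → girgEdge γ μbar d n ω (v i) (v j)}
  | .ind => {v : Fin k → Fin n | v ∈ Mset ε α β d n ω.1 ω.2.1 ∧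
    ∀ i j : Fin k, i ≠ j → (H.Adj i j ↔ girgEdge γ μbar d n ω (v i) (v j))}

theorem starNM_eq (s : StarKind) {k : ℕ} (H : SimpleGraph (Fin k)) (γ μbar ε : ℝ) (α : Fin k → ℝ)
    (β : Fin k → Fin k → ℝ) (d n : ℕ) (ω : GirgΩ d n) :
    starNM s H γ μbar ε α β d n ω = (starSet s H γ μbar ε α β d n ω).ncard := by
  cases s <;> rfl

theorem Aev_counted {k d n : ℕ} [NeZero k] (hn : 1 ≤ n) (s : StarKind) (H : SimpleGraph (Fin k))
    (γ μbar ε a b t η : ℝ) (hγ : 0 < γ) (hμ : 0 < μbar) (hε : 0 < ε) (hab : (d:ℝ) * b = 2 * a - 1)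
    (hη : 0 < η)
    (z : Fin k → Torus d) (ρ : Fin k → Fin k → ℝ)
    (hz : ∀ i j, i < j → dist (z i) (z j) = (n:ℝ) ^ b * ρ i j)
    (hρ : ∀ i j, i < j → ε ≤ ρ i j - 2 * η ∧ ρ i j + 2 * η ≤ 1 / ε)
    (W : Set ℝ) (hW : W ⊆ windowIcc ε ((n:ℝ) ^ a) ∩ Set.Iic (t * (n:ℝ) ^ a))
    (Bc : Fin k × Fin k → Set ℝ)
    (hB1 : ∀ i j, i < j → H.Adj i j → Bc (i, j) ⊆ Set.Iic (min 1 ((ε ^ 2 * ε ^ d / μbar) ^ γ)))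
    (hB2 : s = .ind → ∀ i j, i < j → ¬ H.Adj i j →
      Bc (i, j) ⊆ Set.Ioi ((t ^ 2 / (μbar * (ρ i j - 2 * η) ^ d)) ^ γ))
    (ω : GirgΩ d n) (v : Fin k → Fin n) (hv : Function.Injective v)
    (hω : ω ∈ Aev W (fun j => z j - z 0) (η * (n:ℝ) ^ b) Bc v) :
    v ∈ starSet s H γ μbar ε (fun _ => a) (fun _ _ => b) d n ω := by
  obtain ⟨h1, h2, h3⟩ := hω
  simp only [Set.mem_ofPred_eq, Finset.mem_univ, forall_true_left, Finset.mem_erase, and_true,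
    prs, Finset.mem_filter, true_and, Prod.forall] at h1 h2 h3
  have hn0 : (0:ℝ) < n := by exact_mod_cast hn
  have ha := Real.rpow_pos_of_pos hn0 a
  have hb := Real.rpow_pos_of_pos hn0 b
  have hnn : (n:ℝ) * ((n:ℝ) ^ b) ^ d = ((n:ℝ) ^ a) ^ 2 := by
    rw [← Real.rpow_natCast, ← Real.rpow_mul hn0.le, ← Real.rpow_natCast, ← Real.rpow_mul hn0.le]
    nth_rewrite 1 [← Real.rpow_one (n:ℝ)]
    rw [← Real.rpow_add hn0]
    congr 1
    push_cast
    linarith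
  have hx : ∀ i, dist (ω.2.1 (v i)) (ω.2.1 (v 0) + (z i - z 0)) ≤ η * (n:ℝ) ^ b := by
    intro i
    by_cases hi : i = 0
    · subst hi; simp; positivity
    · exact h2 i hi
  have hdd : ∀ i j, i < j → (ρ i j - 2 * η) * (n:ℝ) ^ b ≤ dist (ω.2.1 (v i)) (ω.2.1 (v j)) ∧
      dist (ω.2.1 (v i)) (ω.2.1 (v j)) ≤ (ρ i j + 2 * η) * (n:ℝ) ^ b := by
    intro i j hij
    have e1 : dist (ω.2.1 (v 0) + (z i - z 0)) (ω.2.1 (v 0) + (z j - z 0)) = (n:ℝ) ^ b * ρ i j := by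
      rw [dist_add_left, dist_sub_right, hz i j hij]
    have a1 := hx i
    have a2 := hx j
    have t1 := dist_triangle4 (ω.2.1 (v i)) (ω.2.1 (v 0) + (z i - z 0)) (ω.2.1 (v 0) + (z j - z 0)) (ω.2.1 (v j))
    have t2 := dist_triangle4 (ω.2.1 (v 0) + (z i - z 0)) (ω.2.1 (v i)) (ω.2.1 (v j)) (ω.2.1 (v 0) + (z j - z 0))
    rw [dist_comm (ω.2.1 (v 0) + (z j - z 0)) (ω.2.1 (v j)), e1] at t1
    rw [dist_comm (ω.2.1 (v 0) + (z i - z 0)) (ω.2.1 (v i)), e1] at t2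
    constructor <;> nlinarith
  have hM : v ∈ Mset ε (fun _ => a) (fun _ _ => b) d n ω.1 ω.2.1 := by
    refine ⟨hv, fun i => (hW (h1 i)).1, fun i j hij => ?_⟩
    obtain ⟨d1, d2⟩ := hdd i j hij
    obtain ⟨r1, r2⟩ := hρ i j hij
    constructor
    · exact (mul_le_mul_of_nonneg_right r1 hb.le).trans d1
    · calc _ ≤ _ := d2
        _ ≤ 1 / ε * (n:ℝ) ^ b := mul_le_mul_of_nonneg_right r2 hb.le
        _ = _ := by ring
  have hedge : ∀ i j, i < j → H.Adj i j → girgEdge γ μbar d n ω (v i) (v j) := by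
    intro i j hij hadj
    refine ⟨fun h => hij.ne (hv h), ?_⟩
    have hc := hB1 i j hij hadj (h3 i j hij)
    refine le_trans hc ?_
    unfold connProb
    refine min_le_min le_rfl ?_
    have wi := ((hW (h1 i)).1).1
    have wj := ((hW (h1 j)).1).1
    have dj := (hM.2.2 i j hij).2
    have di := (hM.2.2 i j hij).1
    have dpos : 0 < dist (ω.2.1 (v i)) (ω.2.1 (v j)) := lt_of_lt_of_le (by positivity) di
    refine Real.rpow_le_rpow (by positivity) ?_ hγ.le
    rw [div_le_div_iff₀ hμ (by positivity)]
    have e2 : dist (ω.2.1 (v i)) (ω.2.1 (v j)) ^ d * ε ^ d ≤ ((n:ℝ) ^ b) ^ d := by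
      rw [← mul_pow]
      refine pow_le_pow_left₀ (by positivity) ?_ _
      exact (le_div_iff₀ hε).1 dj
    have e3 : (ε * (n:ℝ) ^ a) * (ε * (n:ℝ) ^ a) ≤ ω.1 (v i) * ω.1 (v j) :=
      mul_le_mul wi wj (by positivity) (le_trans (by positivity) wi)
    calc ε ^ 2 * ε ^ d * ((n:ℝ) * μbar * dist (ω.2.1 (v i)) (ω.2.1 (v j)) ^ d)
        = ε ^ 2 * μbar * (n * (dist (ω.2.1 (v i)) (ω.2.1 (v j)) ^ d * ε ^ d)) := by ring
      _ ≤ ε ^ 2 * μbar * (n * ((n:ℝ) ^ b) ^ d) := by gcongr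
      _ = (ε * (n:ℝ) ^ a) * (ε * (n:ℝ) ^ a) * μbar := by rw [hnn]; ring
      _ ≤ _ := by gcongr
  have hedge' : ∀ i j, H.Adj i j → girgEdge γ μbar d n ω (v i) (v j) := by
    intro i j hadj
    rcases lt_or_gt_of_ne hadj.ne with h | h
    · exact hedge i j h hadj
    · rw [girgEdge_symm]; exact hedge j i h hadj.symm
  cases s with
  | sub => exact ⟨hM, hedge'⟩
  | ind =>
    have hnon : ∀ i j, i < j → ¬ H.Adj i j → ¬ girgEdge γ μbar d n ω (v i) (v j) := by
      intro i j hij hadj he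
      have hc := hB2 rfl i j hij hadj (h3 i j hij)
      have := he.2
      refine absurd (lt_of_lt_of_le hc this) (not_lt.2 ?_)
      unfold connProb
      refine (min_le_right _ _).trans ?_
      have wi := (hW (h1 i)).2
      have wj := (hW (h1 j)).2
      have wi0 : 0 < ω.1 (v i) := lt_of_lt_of_le (by positivity) ((hW (h1 i)).1).1
      have wj0 : 0 < ω.1 (v j) := lt_of_lt_of_le (by positivity) ((hW (h1 j)).1).1
      obtain ⟨d1, d2⟩ := hdd i j hij
      have r0 : 0 < ρ i j - 2 * η := lt_of_lt_of_le hε (hρ i j hij).1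
      have dpos : 0 < dist (ω.2.1 (v i)) (ω.2.1 (v j)) := lt_of_lt_of_le (by positivity) d1
      refine Real.rpow_le_rpow (by positivity) ?_ hγ.le
      rw [div_le_div_iff₀ (by positivity) (by positivity)]
      have wi' : ω.1 (v i) ≤ t * (n:ℝ) ^ a := wi
      have wj' : ω.1 (v j) ≤ t * (n:ℝ) ^ a := wj
      have e3 : ω.1 (v i) * ω.1 (v j) ≤ (t * (n:ℝ) ^ a) * (t * (n:ℝ) ^ a) :=
        mul_le_mul wi' wj' wj0.le (le_trans wi0.le wi')
      have e4 : ((ρ i j - 2 * η) * (n:ℝ) ^ b) ^ d ≤ dist (ω.2.1 (v i)) (ω.2.1 (v j)) ^ d :=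
        pow_le_pow_left₀ (by positivity) d1 _
      calc ω.1 (v i) * ω.1 (v j) * (μbar * (ρ i j - 2 * η) ^ d)
          ≤ (t * (n:ℝ) ^ a) * (t * (n:ℝ) ^ a) * (μbar * (ρ i j - 2 * η) ^ d) := by gcongr
        _ = t ^ 2 * (μbar * (n * ((ρ i j - 2 * η) * (n:ℝ) ^ b) ^ d)) := by
            rw [mul_pow]
            calc _ = t ^ 2 * (μbar * (((n:ℝ)^a)^2 * (ρ i j - 2 * η) ^ d)) := by ring
              _ = _ := by rw [← hnn]; ring
        _ ≤ t ^ 2 * (μbar * (n * dist (ω.2.1 (v i)) (ω.2.1 (v j)) ^ d)) := by gcongr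
        _ = _ := by ring
    refine ⟨hM, fun i j hij => ⟨hedge' i j, fun he => ?_⟩⟩
    by_contra hadj
    rcases lt_or_gt_of_ne hij with h | h
    · exact hnon i j h hadj he
    · exact hnon j i h (fun h' => hadj h'.symm) ((girgEdge_symm ..).1 he)

theorem aev_lower {k d n : ℕ} [NeZero k] (hn : 1 ≤ n) (μW : Measure ℝ) [IsProbabilityMeasure μW]
    (W : Set ℝ) (hW : MeasurableSet W) (hW0 : 0 < μW.real W) (y : Fin k → Torus d)
    (r : ℝ) (hr : 0 < r) (hr1 : 2 * r ≤ 1)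
    (Bc : Fin k × Fin k → Set ℝ) (hB : ∀ p, MeasurableSet (Bc p)) (κ : ℝ)
    (hκ : (∏ p ∈ prs k, coinM (Bc p)).toReal = κ) (hκ0 : 0 < κ)
    (R : ℝ) (hR : ∀ j, ‖y j‖ + r ≤ R) (L : ℝ) (hL0 : 0 < L) (hL : (6 * R) ^ d = L * (2 * r) ^ d)
    (q : ℝ) (hq : 0 < q) (hq1 : q ≤ 1) (hQ : q ≤ n * μW.real W * (6 * R) ^ d)
    (I : Finset (Fin k → Fin n)) (hinj : ∀ v ∈ I, Function.Injective v)
    (hI : (n:ℝ) ^ k / 2 ≤ (I.card : ℝ)) :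
    girgMeasure μW d n {ω | ∑ v ∈ I, (Aev W y r Bc v).indicator (fun _ => (1:ℝ)) ω <
        (n:ℝ) ^ k * μW.real W ^ k * ((2 * r) ^ d) ^ (k - 1) * κ / 4} ≤
      ENNReal.ofReal ((16 * 2 ^ k * k ^ k * L ^ (2 * (k - 1)) / (q ^ k * κ ^ 2)) / (n * μW.real W)) := by
  classical
  have hk : 1 ≤ k := Nat.one_le_iff_ne_zero.2 (NeZero.ne k)
  set p := μW.real W with hp
  set U := (6 * R) ^ d with hU
  set V := (2 * r) ^ d with hV
  have hR0 : 0 < R := lt_of_lt_of_le (by positivity) (hR 0)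
  have hU0 : 0 < U := by positivity
  have hV0 : 0 < V := by positivity
  have hn0 : (0:ℝ) < n := by exact_mod_cast hn
  have hPA : ∀ v ∈ I, (girgMeasure μW d n).real (Aev W y r Bc v) = p ^ k * (V ^ (k - 1) * κ) := by
    intro v hv
    rw [measureReal_def, Aev_single μW hW y r hr.le hB v (hinj v hv), min_eq_right hr1]
    rw [ENNReal.toReal_mul, ENNReal.toReal_mul, hκ, ENNReal.toReal_pow, ENNReal.toReal_pow,
      ENNReal.toReal_ofReal hV0.le]
    rfl
  have hm : ∑ v ∈ I, (girgMeasure μW d n).real (Aev W y r Bc v) = I.card * (p ^ k * (V ^ (k - 1) * κ)) := by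
    rw [Finset.sum_congr rfl hPA, Finset.sum_const, nsmul_eq_mul]
  have hI0 : (0:ℝ) < I.card := lt_of_lt_of_le (by positivity) hI
  have hmm : (n:ℝ) ^ k * p ^ k * V ^ (k - 1) * κ / 4 ≤ I.card * (p ^ k * (V ^ (k - 1) * κ)) / 2 := by
    have : (n:ℝ) ^ k / 2 * (p ^ k * (V ^ (k - 1) * κ)) ≤ I.card * (p ^ k * (V ^ (k - 1) * κ)) := by gcongr
    linarith
  have hsm := second_moment (girgMeasure μW d n) I (Aev W y r Bc) (fun v => Aev_meas hW y r hB v)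
    (fun v v' => newIdx v v' ≠ Finset.univ)
    (by
      intro v hv v' hv' h
      push Not at h
      rw [measureReal_def, Aev_pair μW hW y r hr.le hB v v' (hinj v hv) (hinj v' hv') ?_, ENNReal.toReal_mul]
      · rfl
      · intro i j
        have : j ∈ newIdx v v' := by rw [h]; simp
        exact (Finset.mem_filter.1 this).2 i)
    _ hm (by positivity)
  refine (measure_mono ?_).trans (hsm.trans ?_)
  · intro ω hω
    exact lt_of_lt_of_le hω hmm
  apply ENNReal.ofReal_le_ofReal
  have hco := count_overlap I (fun v v' => (girgMeasure μW d n).real (Aev W y r Bc v ∩ Aev W y r Bc v'))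
    (fun s => p ^ (k + s) * U ^ (k - 1 + s)) (fun s => by positivity)
    (by
      intro v hv v' hv' h
      have := Aev_overlap μW hW y r hr.le Bc R hR v v' (hinj v hv) (hinj v' hv') h
      have h2 := ENNReal.toReal_mono (by finiteness) this
      rw [ENNReal.toReal_mul, ENNReal.toReal_pow, ENNReal.toReal_pow,
        ENNReal.toReal_ofReal hU0.le] at h2
      exact h2)
  set N := (n:ℝ) * p with hN
  have hN0 : 0 < N := by positivity
  have hterm : ∀ S ∈ (Finset.univ : Finset (Finset (Fin k))).erase Finset.univ,
      (n:ℝ) ^ k * ((n:ℝ) ^ S.card * (k:ℝ) ^ (k - S.card)) * (p ^ (k + S.card) * U ^ (k - 1 + S.card)) ≤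
      k ^ k * (N ^ (2 * k) * U ^ (2 * (k - 1)) / (N * q ^ k)) := by
    intro S hS
    have hc : S.card < k := by
      have := Finset.card_lt_univ_of_notMem (s := S) (x := ?_) ?_
      · simpa using this
      · exact (not_forall.1 (fun h => (Finset.ne_of_mem_erase hS) (Finset.eq_univ_iff_forall.2 h))).choose
      · exact (not_forall.1 (fun h => (Finset.ne_of_mem_erase hS) (Finset.eq_univ_iff_forall.2 h))).choose_spec
    have hk1 : (1:ℝ) ≤ k := by exact_mod_cast hk
    have e1 : (k:ℝ) ^ (k - S.card) ≤ k ^ k := pow_le_pow_right₀ hk1 (Nat.sub_le _ _)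
    have e2 : N ^ (k + S.card) * U ^ (k - 1 + S.card) ≤ N ^ (2 * k) * U ^ (2 * (k - 1)) / (N * q ^ k) := by
      rw [le_div_iff₀ (by positivity)]
      have e3 : q ^ k ≤ (N * U) ^ (k - 1 - S.card) :=
        (pow_le_pow_of_le_one hq.le hq1 (by omega)).trans (pow_le_pow_left₀ hq.le hQ _)
      calc N ^ (k + S.card) * U ^ (k - 1 + S.card) * (N * q ^ k)
          ≤ N ^ (k + S.card) * U ^ (k - 1 + S.card) * (N * (N * U) ^ (k - 1 - S.card)) := by gcongr
        _ = N ^ (k + S.card + 1 + (k - 1 - S.card)) * U ^ (k - 1 + S.card + (k - 1 - S.card)) := by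
            rw [mul_pow]; ring
        _ = _ := by
            congr 2 <;> omega
    calc _ = (k:ℝ) ^ (k - S.card) * (N ^ (k + S.card) * U ^ (k - 1 + S.card)) := by
          rw [hN, mul_pow]; ring
      _ ≤ _ := by gcongr
  have hsum := hco.trans (Finset.sum_le_sum hterm)
  rw [Finset.sum_const, nsmul_eq_mul] at hsum
  have hcard : (((Finset.univ : Finset (Finset (Fin k))).erase Finset.univ).card : ℝ) ≤ 2 ^ k := by
    have := Finset.card_le_univ ((Finset.univ : Finset (Finset (Fin k))).erase Finset.univ)
    rw [Fintype.card_finset, Fintype.card_fin] at this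
    exact_mod_cast this
  have hsum2 := hsum.trans (mul_le_mul_of_nonneg_right hcard (by positivity))
  have hm0 : 0 < (n:ℝ) ^ k * p ^ k * V ^ (k - 1) * κ / 4 := by positivity
  calc _ ≤ (2:ℝ) ^ k * (k ^ k * (N ^ (2 * k) * U ^ (2 * (k - 1)) / (N * q ^ k))) /
        ((n:ℝ) ^ k * p ^ k * V ^ (k - 1) * κ / 4) ^ 2 := by
        gcongr
    _ = _ := by
        have e1 : ((n:ℝ) ^ k * p ^ k * V ^ (k - 1) * κ / 4) ^ 2 = N ^ (2 * k) * V ^ (2 * (k - 1)) * κ ^ 2 / 16 := by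
          rw [hN, mul_pow, pow_mul' , pow_mul' , pow_mul']; ring
        rw [e1, hL]
        field_simp
        rw [mul_pow]
        ring

end lower

section lower2
open scoped ENNReal Topology

theorem inj_count (k : ℕ) : ∀ᶠ n : ℕ in atTop,
    (n:ℝ) ^ k / 2 ≤ (((Finset.univ : Finset (Fin k → Fin n)).filter (fun v => Function.Injective v)).card : ℝ) := by
  have h1 : Tendsto (fun n : ℕ => (1 - (k:ℝ) / n) ^ k) atTop (𝓝 ((1 - 0) ^ k)) :=
    ((tendsto_const_nhds).sub (tendsto_const_div_atTop_nhds_zero_nat (k:ℝ))).pow k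
  have h2 : (1:ℝ) / 2 < (1 - 0) ^ k := by norm_num
  filter_upwards [h1.eventually (lt_mem_nhds h2), eventually_ge_atTop (k + 1)] with n hn hk
  have hcard : ((Finset.univ : Finset (Fin k → Fin n)).filter (fun v => Function.Injective v)).card = n.descFactorial k := by
    have := Fintype.card_embedding_eq (α := Fin k) (β := Fin n)
    rw [Fintype.card_fin, Fintype.card_fin] at this
    rw [← this, ← Fintype.card_subtype]
    exact Fintype.card_congr (Equiv.subtypeInjectiveEquivEmbedding _ _)
  rw [hcard]
  have h3 := Nat.pow_sub_le_descFactorial n k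
  have hn0 : (0:ℝ) < n := by exact_mod_cast (by omega : 0 < n)
  have h4 : ((n:ℝ) - k) ^ k ≤ (n.descFactorial k : ℝ) := by
    have h5 : ((n:ℝ) - k) ^ k ≤ (((n + 1 - k : ℕ) : ℝ)) ^ k := by
      refine pow_le_pow_left₀ ?_ ?_ _
      · rw [sub_nonneg]; exact_mod_cast (by omega : k ≤ n)
      · rw [Nat.cast_sub (by omega)]; push_cast; linarith
    exact h5.trans (by exact_mod_cast h3)
  refine le_trans ?_ h4
  have h6 : ((n:ℝ) - k) = n * (1 - (k:ℝ) / n) := by field_simp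
  rw [h6, mul_pow]
  have : (n:ℝ) ^ k * (1 / 2) ≤ (n:ℝ) ^ k * (1 - (k:ℝ) / n) ^ k := by gcongr
  linarith

theorem lower_bound {k d : ℕ} [NeZero k] (τ γ μbar : ℝ) (hγ : 0 < γ) (hμ : 0 < μbar)
    (μW : Measure ℝ) [IsProbabilityMeasure μW]
    (H : SimpleGraph (Fin k)) (s : StarKind) (ε : ℝ) (hε : 0 < ε) (a b : ℝ)
    (hab : (d:ℝ) * b = 2 * a - 1) (hb : b ≤ 0) (h1 : 0 < 1 + (1 - τ) * a)
    (h2 : 0 ≤ 1 + (1 - τ) * a + d * b) (t : ℝ)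
    (hπ : ∃ c0 > 0, ∀ᶠ n : ℕ in atTop, c0 * (n:ℝ) ^ ((1 - τ) * a) ≤
      μW.real (windowIcc ε ((n:ℝ) ^ a) ∩ Set.Iic (t * (n:ℝ) ^ a)))
    (ρ : Fin k → Fin k → ℝ) (z : ℕ → Fin k → Torus d)
    (hz : ∀ᶠ n : ℕ in atTop, ∀ i j, i < j → dist (z n i) (z n j) = (n:ℝ) ^ b * ρ i j)
    (hρ : ∀ i j, i < j → ε < ρ i j ∧ ρ i j < 1 / ε)
    (hnon : s = .ind → ∀ i j, i < j → ¬ H.Adj i j → t ^ 2 < μbar * ρ i j ^ d) :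
    ∃ c1 > 0, Tendsto (fun n : ℕ => girgMeasure μW d n
      {ω | (starNM s H γ μbar ε (fun _ => a) (fun _ _ => b) d n ω : ℝ) <
        c1 * (n:ℝ) ^ ((k:ℝ) + (1 - τ) * (k * a) + d * ((k - 1) * b))}) atTop (𝓝 0) := by
  classical
  obtain ⟨c0, hc0, hπ⟩ := hπ
  have hk : 1 ≤ k := Nat.one_le_iff_ne_zero.2 (NeZero.ne k)
  -- choose η
  have hη : ∀ᶠ η : ℝ in 𝓝[>] 0, 2 * η < 1 ∧ ∀ i j, i < j → (ε < ρ i j - 2 * η ∧ ρ i j + 2 * η < 1 / ε ∧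
      (s = .ind → ¬ H.Adj i j → t ^ 2 < μbar * (ρ i j - 2 * η) ^ d)) := by
    refine (Eventually.and ?_ ?_).filter_mono nhdsWithin_le_nhds
    · have : ContinuousAt (fun η : ℝ => 2 * η) 0 := by fun_prop
      exact this.eventually (gt_mem_nhds (by norm_num))
    · simp only [eventually_all]
      intro i j hij
      refine Eventually.and ?_ (Eventually.and ?_ ?_)
      · have : ContinuousAt (fun η : ℝ => ρ i j - 2 * η) 0 := by fun_prop
        exact this.eventually (lt_mem_nhds (by simpa using (hρ i j hij).1))
      · have : ContinuousAt (fun η : ℝ => ρ i j + 2 * η) 0 := by fun_prop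
        exact this.eventually (gt_mem_nhds (by simpa using (hρ i j hij).2))
      · by_cases hs : s = .ind
        · by_cases hadj : H.Adj i j
          · exact Eventually.of_forall fun _ _ h => absurd hadj h
          · have : ContinuousAt (fun η : ℝ => μbar * (ρ i j - 2 * η) ^ d) 0 := by fun_prop
            filter_upwards [this.eventually (lt_mem_nhds (by simpa using hnon hs i j hij hadj))] with η h _ _
            exact h
        · exact Eventually.of_forall fun _ h => absurd h hs
  obtain ⟨η, ⟨hη1, hη2⟩, hη0⟩ := (hη.and self_mem_nhdsWithin).exists
  have hη0 : 0 < η := hη0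
  set Bc : Fin k × Fin k → Set ℝ := fun p =>
    if H.Adj p.1 p.2 then Set.Iic (min 1 ((ε ^ 2 * ε ^ d / μbar) ^ γ))
    else if s = .ind then Set.Ioi ((t ^ 2 / (μbar * (ρ p.1 p.2 - 2 * η) ^ d)) ^ γ) else Set.univ with hBc
  have hB : ∀ p, MeasurableSet (Bc p) := by
    intro p; simp only [hBc]; split_ifs
    · exact measurableSet_Iic
    · exact measurableSet_Ioi
    · exact MeasurableSet.univ
  have hBpos : ∀ p ∈ prs k, 0 < coinM (Bc p) := by
    intro p hp
    have hij : p.1 < p.2 := by simpa [prs] using hp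
    simp only [hBc]; split_ifs with h h'
    · rw [coin_Iic (by positivity)]
      rw [ENNReal.ofReal_pos]
      positivity
    · obtain ⟨r1, r2, r3⟩ := hη2 _ _ hij
      have r0 : 0 < ρ p.1 p.2 - 2 * η := hε.trans r1
      refine coin_Ioi (by positivity) ?_
      refine Real.rpow_lt_one (by positivity) ?_ hγ
      rw [div_lt_one (by positivity)]
      exact r3 h' h
    · simp
  set κ := (∏ p ∈ prs k, coinM (Bc p)).toReal with hκ
  have hκ0 : 0 < κ := by
    rw [hκ, ENNReal.toReal_pos_iff]
    refine ⟨?_, ?_⟩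
    · rw [pos_iff_ne_zero, Finset.prod_ne_zero_iff]
      exact fun p hp => (hBpos p hp).ne'
    · exact ENNReal.prod_lt_top fun p _ => measure_lt_top _ _
  set A := 6 * (η + 1 / ε) with hA
  have hA0 : 0 < A := by positivity
  set L := (A / (2 * η)) ^ d with hLdef
  set q := min 1 (c0 * A ^ d) with hq
  have hq0 : 0 < q := lt_min one_pos (by positivity)
  set C := 16 * 2 ^ k * (k:ℝ) ^ k * L ^ (2 * (k - 1)) / (q ^ k * κ ^ 2) with hC
  have hC0 : 0 ≤ C := by positivity
  refine ⟨c0 ^ k * ((2 * η) ^ d) ^ (k - 1) * κ / 4, by positivity, ?_⟩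
  have hlim : Tendsto (fun n : ℕ => ENNReal.ofReal (C / (c0 * (n:ℝ) ^ (1 + (1 - τ) * a)))) atTop (𝓝 0) := by
    rw [← ENNReal.ofReal_zero]
    refine ENNReal.tendsto_ofReal ?_
    refine Tendsto.div_atTop tendsto_const_nhds ?_
    exact ((tendsto_rpow_atTop h1).comp tendsto_natCast_atTop_atTop).const_mul_atTop hc0
  refine tendsto_of_tendsto_of_tendsto_of_le_of_le' tendsto_const_nhds hlim
    (Eventually.of_forall fun _ => zero_le) ?_
  filter_upwards [hπ, hz, inj_count k, eventually_ge_atTop 1] with n hπn hzn hIn hn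
  have hn0 : (0:ℝ) < n := by exact_mod_cast hn
  have hn1 : (1:ℝ) ≤ n := by exact_mod_cast hn
  have hnb := Real.rpow_pos_of_pos hn0 b
  have hnb1 : (n:ℝ) ^ b ≤ 1 := Real.rpow_le_one_of_one_le_of_nonpos hn1 hb
  set W := windowIcc ε ((n:ℝ) ^ a) ∩ Set.Iic (t * (n:ℝ) ^ a) with hW
  have hWm : MeasurableSet W := measurableSet_Icc.inter measurableSet_Iic
  have hW0 : 0 < μW.real W := lt_of_lt_of_le (by positivity) hπn
  set I := (Finset.univ : Finset (Fin k → Fin n)).filter (fun v => Function.Injective v) with hI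
  have hinj : ∀ v ∈ I, Function.Injective v := fun v hv => (Finset.mem_filter.1 hv).2
  have hnd : ((n:ℝ) ^ b) ^ d = (n:ℝ) ^ (d * b) := by
    rw [← Real.rpow_natCast, ← Real.rpow_mul hn0.le, mul_comm]
  have hyR : ∀ j, ‖(fun j => z n j - z n 0) j‖ + η * (n:ℝ) ^ b ≤ (η + 1 / ε) * (n:ℝ) ^ b := by
    intro j
    have : dist (z n j) (z n 0) ≤ 1 / ε * (n:ℝ) ^ b := by
      by_cases hj : j = 0
      · rw [hj, dist_self]; positivity
      · have hj0 : (0 : Fin k) < j := Fin.pos_iff_ne_zero.2 hj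
        rw [dist_comm, hzn 0 j hj0, mul_comm]
        exact mul_le_mul_of_nonneg_right (hρ 0 j hj0).2.le hnb.le
    rw [dist_eq_norm] at this
    simp only
    linarith
  have hnp : c0 * (n:ℝ) ^ (1 + (1 - τ) * a) ≤ n * μW.real W := by
    rw [Real.rpow_add hn0, Real.rpow_one]
    nlinarith
  have hmain := aev_lower hn μW W hWm hW0 (fun j => z n j - z n 0) (η * (n:ℝ) ^ b) (by positivity)
    (by nlinarith) Bc hB κ hκ.symm hκ0 ((η + 1 / ε) * (n:ℝ) ^ b) hyR L (by positivity)
    (by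
      rw [hLdef, ← mul_pow]
      congr 1
      rw [hA]; field_simp)
    q hq0 (min_le_left _ _)
    (by
      have e : (6 * ((η + 1 / ε) * (n:ℝ) ^ b)) ^ d = A ^ d * (n:ℝ) ^ (d * b) := by
        rw [← hnd, ← mul_pow, hA]; congr 1; ring
      rw [e]
      have h3 : (1:ℝ) ≤ (n:ℝ) ^ (1 + (1 - τ) * a + d * b) := Real.one_le_rpow hn1 h2
      calc q ≤ c0 * A ^ d * 1 := by rw [mul_one]; exact min_le_right _ _
        _ ≤ c0 * A ^ d * (n:ℝ) ^ (1 + (1 - τ) * a + d * b) := by gcongr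
        _ = (c0 * (n:ℝ) ^ (1 + (1 - τ) * a)) * (A ^ d * (n:ℝ) ^ (d * b)) := by
            rw [Real.rpow_add hn0 (1 + (1 - τ) * a)]; ring
        _ ≤ _ := by gcongr)
    I hinj hIn
  refine (measure_mono ?_).trans (hmain.trans ?_)
  · intro ω hω
    rw [Set.mem_ofPred_eq] at hω ⊢
    refine lt_of_le_of_lt ?_ (lt_of_lt_of_le hω ?_)
    · rw [starNM_eq, ncard_eq_sum]
      refine le_trans ?_ (Finset.sum_le_univ_sum_of_nonneg (s := I) fun v => Set.indicator_nonneg (fun _ _ => zero_le_one) _)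
      refine Finset.sum_le_sum fun v hv => ?_
      by_cases hmem : ω ∈ Aev W (fun j => z n j - z n 0) (η * (n:ℝ) ^ b) Bc v
      · have := Aev_counted hn s H γ μbar ε a b t η hγ hμ hε hab hη0 (z n) ρ hzn
          (fun i j hij => ⟨(hη2 i j hij).1.le, (hη2 i j hij).2.1.le⟩) W subset_rfl Bc
          (fun i j hij hadj => by simp [hBc, hadj])
          (fun hs i j hij hadj => by simp [hBc, hadj, hs]) ω v (hinj v hv) hmem
        rw [Set.indicator_of_mem hmem, Set.indicator_of_mem this]
      · rw [Set.indicator_of_notMem hmem]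
        exact Set.indicator_nonneg (fun _ _ => zero_le_one) _
    · have e1 : (n:ℝ) ^ ((k:ℝ) + (1 - τ) * (k * a) + d * ((k - 1) * b)) =
          (n:ℝ) ^ k * ((n:ℝ) ^ ((1 - τ) * a)) ^ k * ((n:ℝ) ^ (d * b)) ^ (k - 1) := by
        rw [← Real.rpow_natCast, ← Real.rpow_natCast, ← Real.rpow_natCast, ← Real.rpow_mul hn0.le,
          ← Real.rpow_mul hn0.le, ← Real.rpow_add hn0, ← Real.rpow_add hn0]
        congr 1
        push_cast [Nat.cast_sub hk]
        ring
      have e2 : (2 * (η * (n:ℝ) ^ b)) ^ d = (2 * η) ^ d * (n:ℝ) ^ (d * b) := by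
        rw [← hnd, ← mul_pow]; congr 1; ring
      rw [e1, e2]
      calc _ = (n:ℝ) ^ k * (c0 * (n:ℝ) ^ ((1 - τ) * a)) ^ k * ((2 * η) ^ d * (n:ℝ) ^ (d * b)) ^ (k - 1) * κ / 4 := by
            rw [mul_pow, mul_pow]; ring
        _ ≤ _ := by gcongr
  · apply ENNReal.ofReal_le_ofReal
    exact div_le_div_of_nonneg_left hC0 (by positivity) hnp

end lower2

section config
open scoped ENNReal Topology

theorem lift_circle (y : AddCircle (1:ℝ)) : ∃ t : ℝ, (t : AddCircle (1:ℝ)) = y ∧ |t| = ‖y‖ := by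
  obtain ⟨t, rfl⟩ := QuotientAddGroup.mk_surjective y
  refine ⟨t - round t, ?_, ?_⟩
  · have : ((round t : ℝ) : AddCircle (1:ℝ)) = 0 := by
      rw [AddCircle.coe_eq_zero_iff]
      exact ⟨round t, by simp⟩
    rw [AddCircle.coe_sub, this, sub_zero]
  · exact (UnitAddCircle.norm_eq).symm

theorem norm_small (t : ℝ) (ht : |t| ≤ 1 / 2) : ‖(t : AddCircle (1:ℝ))‖ = |t| := by
  rw [AddCircle.norm_coe_eq_abs_iff _ one_ne_zero]
  simpa using ht

theorem scale_config {k d : ℕ} [NeZero k] (x : Fin k → Torus d) (h : ∀ i, dist (x i) (x 0) ≤ 1 / 4) :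
    ∃ T : Fin k → Fin d → ℝ, ∀ l : ℝ, 0 ≤ l → l ≤ 1 → ∀ i j,
      dist ((fun c => ((l * T i c : ℝ) : AddCircle (1:ℝ))) : Torus d)
        (fun c => ((l * T j c : ℝ) : AddCircle (1:ℝ))) = l * dist (x i) (x j) := by
  choose T hT1 hT2 using fun i c => lift_circle (x i c - x 0 c)
  refine ⟨T, fun l hl0 hl1 i j => ?_⟩
  have hT3 : ∀ i c, |T i c| ≤ 1 / 4 := by
    intro i c
    rw [hT2, ← dist_eq_norm]
    exact (dist_le_pi_dist (x i) (x 0) c).trans (h i)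
  have hT4 : ∀ c, |T i c - T j c| ≤ 1 / 2 := by
    intro c
    have := abs_sub (T i c) (T j c)
    have a1 := hT3 i c
    have a2 := hT3 j c
    linarith
  have e1 : ∀ c, dist (x i c) (x j c) = |T i c - T j c| := by
    intro c
    rw [← norm_small _ (hT4 c), AddCircle.coe_sub, hT1, hT1, dist_eq_norm]
    congr 1; abel
  have e2 : ∀ c, dist ((l * T i c : ℝ) : AddCircle (1:ℝ)) ((l * T j c : ℝ) : AddCircle (1:ℝ)) =
      l * dist (x i c) (x j c) := by
    intro c
    rw [dist_eq_norm, ← AddCircle.coe_sub, ← mul_sub, norm_small, e1, abs_mul, abs_of_nonneg hl0]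
    rw [abs_mul, abs_of_nonneg hl0]
    have := hT4 c
    have := abs_nonneg (T i c - T j c)
    nlinarith
  rcases hl0.eq_or_lt with h0 | h0
  · subst h0; simp
  apply le_antisymm
  · rw [dist_pi_le_iff (by positivity)]
    intro c
    rw [e2]
    exact mul_le_mul_of_nonneg_left (dist_le_pi_dist _ _ c) hl0
  · rw [← le_div_iff₀' h0, dist_pi_le_iff (by positivity)]
    intro c
    rw [le_div_iff₀' h0, ← e2]
    exact dist_le_pi_dist (fun c => ((l * T i c : ℝ) : AddCircle (1:ℝ))) (fun c => ((l * T j c : ℝ) : AddCircle (1:ℝ))) c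

theorem config_raw {k d n : ℕ} (hd : 1 ≤ d) (hn : 1 ≤ n) (γ μbar : ℝ) (hγ : 0 < γ) (hμ : 0 < μbar)
    (μW : Measure ℝ) [IsProbabilityMeasure μW]
    (H : SimpleGraph (Fin k)) (s : StarKind) (ε : ℝ) (hε : 0 < ε) (a b : ℝ)
    (p : ℝ → Prop) (hp : ∀ᵐ x ∂μW, p x)
    (hnot : ¬ ∀ᵐ ω ∂(girgMeasure μW d n),
      starNM s H γ μbar ε (fun _ => a) (fun _ _ => b) d n ω = 0) :
    ∃ (x : Fin k → Torus d) (u : Fin k → ℝ), (∀ i, p (u i)) ∧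
      (∀ i, u i ∈ windowIcc ε ((n:ℝ) ^ a)) ∧
      (∀ i j, i < j → ε * (n:ℝ) ^ b < dist (x i) (x j) ∧ dist (x i) (x j) < (n:ℝ) ^ b / ε) ∧
      (s = .ind → ∀ i j, i < j → ¬ H.Adj i j → u i * u j < n * μbar * dist (x i) (x j) ^ d) := by
  have hn0 : (0:ℝ) < n := by exact_mod_cast hn
  have hnb := Real.rpow_pos_of_pos hn0 b
  have hna := Real.rpow_pos_of_pos hn0 a
  by_contra hcon
  apply hnot
  filter_upwards [ae_girg_coin μW d n, ae_girg_w μW d n hp,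
    ae_girg_pos μW d n (ae_dist_ne hd (ε * (n:ℝ) ^ b) (by positivity)),
    ae_girg_pos μW d n (ae_dist_ne hd ((n:ℝ) ^ b / ε) (by positivity))] with ω hc hw hd1 hd2
  by_contra hne
  apply hcon
  rw [starNM_eq] at hne
  obtain ⟨v, hv⟩ := Set.nonempty_of_ncard_ne_zero hne
  have hM : v ∈ Mset ε (fun _ => a) (fun _ _ => b) d n ω.1 ω.2.1 := by
    cases s <;> exact hv.1
  refine ⟨ω.2.1 ∘ v, ω.1 ∘ v, fun i => hw _, hM.2.1, fun i j hij => ?_, fun hs i j hij hadj => ?_⟩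
  · have h := hM.2.2 i j hij
    have hvv : v i ≠ v j := fun h => hij.ne (hM.1 h)
    exact ⟨lt_of_le_of_ne h.1 (hd1 _ _ hvv).symm, lt_of_le_of_ne h.2 (hd2 _ _ hvv)⟩
  · subst hs
    have hvv : v i ≠ v j := fun h => hij.ne (hM.1 h)
    have h := mt (hv.2 i j hij.ne).2 hadj
    have h2 : connProb γ μbar d n ω.1 ω.2.1 (v i) (v j) < 1 := by
      by_contra h3
      exact h ⟨hvv, (hc _).trans (not_lt.1 h3)⟩
    have hdp : 0 < dist (ω.2.1 (v i)) (ω.2.1 (v j)) := lt_of_lt_of_le (by positivity) (hM.2.2 i j hij).1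
    by_contra h4
    simp only [Function.comp, not_lt] at h4
    refine absurd h2 (not_lt.2 ?_)
    refine le_min le_rfl (Real.one_le_rpow ?_ hγ.le)
    rw [le_div_iff₀ (by positivity), one_mul]
    exact h4

theorem dich_half {k d : ℕ} [NeZero k] (hd : 1 ≤ d) (τ γ c : ℝ) (hτ : τ ∈ Set.Ioo (2:ℝ) 3) (hγ : 1 < γ)
    (μW : Measure ℝ) [IsProbabilityMeasure μW] (hW : WeightTail τ c μW)
    (H : SimpleGraph (Fin k)) (s : StarKind) (ε : ℝ) (hε : ε ∈ Set.Ioo (0:ℝ) 1) :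
    (∃ c1 > 0, Tendsto (fun n : ℕ => girgMeasure μW d n
      {ω | (starNM s H γ (wMean μW) ε (fun _ => 1/2) (fun _ _ => 0) d n ω : ℝ) <
        c1 * (n:ℝ) ^ ((k:ℝ) + (1 - τ) * (k * (1/2)) + d * ((k - 1) * 0))}) atTop (𝓝 0)) ∨
    (∀ᶠ n : ℕ in atTop, ∀ᵐ ω ∂(girgMeasure μW d n),
      starNM s H γ (wMean μW) ε (fun _ => 1/2) (fun _ _ => 0) d n ω = 0) := by
  have hμ := wMean_pos hτ.1 μW hW
  by_cases hall : ∀ᶠ n : ℕ in atTop, ∀ᵐ ω ∂(girgMeasure μW d n),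
      starNM s H γ (wMean μW) ε (fun _ => 1/2) (fun _ _ => 0) d n ω = 0
  · exact Or.inr hall
  left
  obtain ⟨n, hnot, hn⟩ := ((not_eventually.1 hall).and_eventually (eventually_ge_atTop 1)).exists
  obtain ⟨x, u, -, hu, hx, hnon⟩ := config_raw hd hn γ (wMean μW) (by linarith) hμ μW H s ε hε.1 (1/2) 0
    (fun _ => True) (by simp) hnot
  simp only [Real.rpow_zero, mul_one] at hx
  have hn0 : (0:ℝ) < n := by exact_mod_cast hn
  have hε0 := hε.1
  have hna := Real.rpow_pos_of_pos hn0 (1/2)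
  have hnn : (n:ℝ) ^ (1/2:ℝ) * (n:ℝ) ^ (1/2:ℝ) = n := by
    rw [← Real.rpow_add hn0]; norm_num
  have hnon2 : s = .ind → ∀ i j, i < j → ¬ H.Adj i j → ε ^ 2 < wMean μW * dist (x i) (x j) ^ d := by
    intro hs i j hij hadj
    have h := hnon hs i j hij hadj
    have h2 : (ε * (n:ℝ) ^ (1/2:ℝ)) * (ε * (n:ℝ) ^ (1/2:ℝ)) ≤ u i * u j :=
      mul_le_mul (hu i).1 (hu j).1 (by positivity) (le_trans (by positivity) (hu i).1)
    have h3 : n * ε ^ 2 < n * (wMean μW * dist (x i) (x j) ^ d) := by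
      calc n * ε ^ 2 = (ε * (n:ℝ) ^ (1/2:ℝ)) * (ε * (n:ℝ) ^ (1/2:ℝ)) := by linear_combination (-ε ^ 2) * hnn
        _ < _ := lt_of_le_of_lt h2 (by linarith)
    exact lt_of_mul_lt_mul_left h3 hn0.le
  have hεε : ε < 1 / ε := hε.2.trans (by rw [lt_div_iff₀ hε0]; linarith [hε.2])
  have ht : ∀ᶠ t : ℝ in 𝓝[>] ε, t < 1 / ε ∧ ∀ i j, (s = .ind → i < j → ¬ H.Adj i j → t ^ 2 < wMean μW * dist (x i) (x j) ^ d) := by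
    refine (Eventually.and (gt_mem_nhds hεε) ?_).filter_mono nhdsWithin_le_nhds
    simp only [eventually_all]
    intro i j hs hij hadj
    have : ContinuousAt (fun t : ℝ => t ^ 2) ε := by fun_prop
    exact this.eventually (gt_mem_nhds (hnon2 hs i j hij hadj))
  obtain ⟨t, ⟨ht1, ht2⟩, ht0⟩ := (ht.and self_mem_nhdsWithin).exists
  have ht0 : ε < t := ht0
  obtain ⟨c0, hc0, hev⟩ := tail_lower hτ.1 μW hW hε0 ht0
  refine lower_bound τ γ (wMean μW) (by linarith) hμ μW H s ε hε0 (1/2) 0 (by norm_num) le_rfl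
    (by linarith [hτ.2]) (by linarith [hτ.2]) t ⟨c0, hc0, ?_⟩ (fun i j => dist (x i) (x j)) (fun _ => x)
    (Eventually.of_forall fun n i j _ => by simp) hx (fun hs i j hij hadj => ht2 i j hs hij hadj)
  have htend : Tendsto (fun n : ℕ => (n:ℝ) ^ (1/2:ℝ)) atTop atTop :=
    (tendsto_rpow_atTop (by norm_num)).comp tendsto_natCast_atTop_atTop
  filter_upwards [htend.eventually hev, eventually_ge_atTop 1] with m hm hm1
  have hm0 : (0:ℝ) < m := by exact_mod_cast hm1
  have hma := Real.rpow_pos_of_pos hm0 (1/2)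
  rw [mul_comm (1 - τ), Real.rpow_mul hm0.le]
  refine hm.trans (measureReal_mono ?_ (measure_ne_top _ _))
  intro w hw
  refine ⟨⟨hw.1.le, hw.2.trans ?_⟩, hw.2⟩
  calc t * (m:ℝ) ^ (1/2:ℝ) ≤ 1 / ε * (m:ℝ) ^ (1/2:ℝ) := by gcongr
    _ = _ := by ring

theorem dich_zero {k d : ℕ} [NeZero k] (hd : 1 ≤ d) (τ γ c : ℝ) (hτ : τ ∈ Set.Ioo (2:ℝ) 3) (hγ : 1 < γ)
    (μW : Measure ℝ) [IsProbabilityMeasure μW] (hW : WeightTail τ c μW)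
    (H : SimpleGraph (Fin k)) (s : StarKind) (ε : ℝ) (hε : ε ∈ Set.Ioo (0:ℝ) 1) :
    (∃ c1 > 0, Tendsto (fun n : ℕ => girgMeasure μW d n
      {ω | (starNM s H γ (wMean μW) ε (fun _ => 0) (fun _ _ => -(1 / (d:ℝ))) d n ω : ℝ) <
        c1 * (n:ℝ) ^ ((k:ℝ) + (1 - τ) * (k * 0) + d * ((k - 1) * (-(1 / (d:ℝ)))))}) atTop (𝓝 0)) ∨
    (∀ᶠ n : ℕ in atTop, ∀ᵐ ω ∂(girgMeasure μW d n),
      starNM s H γ (wMean μW) ε (fun _ => 0) (fun _ _ => -(1 / (d:ℝ))) d n ω = 0) := by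
  have hμ := wMean_pos hτ.1 μW hW
  have hd0 : (0:ℝ) < d := by exact_mod_cast hd
  by_cases hall : ∀ᶠ n : ℕ in atTop, ∀ᵐ ω ∂(girgMeasure μW d n),
      starNM s H γ (wMean μW) ε (fun _ => 0) (fun _ _ => -(1 / (d:ℝ))) d n ω = 0
  · exact Or.inr hall
  left
  have hε0 := hε.1
  have hsmall : ∀ᶠ n : ℕ in atTop, (n:ℝ) ^ (-(1 / (d:ℝ))) < ε / 4 := by
    have := (tendsto_rpow_neg_atTop (y := 1 / (d:ℝ)) (by positivity)).comp tendsto_natCast_atTop_atTop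
    exact this.eventually (gt_mem_nhds (by positivity))
  obtain ⟨n, hnot, hn, hsm⟩ := ((not_eventually.1 hall).and_eventually ((eventually_ge_atTop 1).and hsmall)).exists
  set b : ℝ := -(1 / (d:ℝ)) with hb
  set Win := windowIcc ε 1 with hWin
  have hWinm : MeasurableSet Win := measurableSet_Icc
  set ν := μW.restrict Win with hν
  have hsup : ∀ᵐ x ∂μW, x ∈ Win → x ∈ ν.support := by
    rw [← ae_restrict_iff' hWinm]
    exact Measure.support_mem_ae
  obtain ⟨x, u, hps, hu, hx, hnon⟩ := config_raw hd hn γ (wMean μW) (by linarith) hμ μW H s ε hε.1 0 b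
    _ hsup hnot
  have hn0 : (0:ℝ) < n := by exact_mod_cast hn
  have hnb := Real.rpow_pos_of_pos hn0 b
  have hnb' : (n:ℝ) ^ (-b) * (n:ℝ) ^ b = 1 := by rw [← Real.rpow_add hn0]; simp
  have hnb'' := Real.rpow_pos_of_pos hn0 (-b)
  simp only [Real.rpow_zero] at hu
  obtain ⟨i0, hi0⟩ := Finite.exists_min u
  set m := u i0 with hm
  have hm0 : 0 < m := lt_of_lt_of_le (by simpa using hε0) (hu i0).1
  set ρ : Fin k → Fin k → ℝ := fun i j => (n:ℝ) ^ (-b) * dist (x i) (x j) with hρ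
  have hρd : ∀ i j, ρ i j ^ d = n * dist (x i) (x j) ^ d := by
    intro i j
    rw [hρ]; simp only
    rw [mul_pow, ← Real.rpow_natCast, ← Real.rpow_mul hn0.le]
    congr 1
    rw [hb, neg_neg, one_div, inv_mul_cancel₀ hd0.ne', Real.rpow_one]
  have hnon2 : s = .ind → ∀ i j, i < j → ¬ H.Adj i j → m ^ 2 < wMean μW * ρ i j ^ d := by
    intro hs i j hij hadj
    have h := hnon hs i j hij hadj
    have h2 : m * m ≤ u i * u j := mul_le_mul (hi0 i) (hi0 j) hm0.le (hm0.le.trans (hi0 i))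
    rw [hρd]
    nlinarith
  have ht : ∀ᶠ t : ℝ in 𝓝[>] m, ∀ i j, (s = .ind → i < j → ¬ H.Adj i j → t ^ 2 < wMean μW * ρ i j ^ d) := by
    refine Eventually.filter_mono nhdsWithin_le_nhds ?_
    simp only [eventually_all]
    intro i j hs hij hadj
    have : ContinuousAt (fun t : ℝ => t ^ 2) m := by fun_prop
    exact this.eventually (gt_mem_nhds (hnon2 hs i j hij hadj))
  obtain ⟨t, ht2, ht0⟩ := (ht.and self_mem_nhdsWithin).exists
  have ht0 : m < t := ht0
  have hpos : 0 < μW.real (Win ∩ Set.Iic t) := by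
    have h1 := (Measure.mem_support_iff_forall m).1 (hps i0 (hu i0)) (Set.Iio t) (Iio_mem_nhds ht0)
    rw [hν, Measure.restrict_apply measurableSet_Iio] at h1
    refine ENNReal.toReal_pos (ne_of_gt (lt_of_lt_of_le h1 (measure_mono ?_))) (measure_ne_top _ _)
    rintro w ⟨h, h'⟩
    exact ⟨h', (le_of_lt h : w ≤ t)⟩
  have hd00 : ∀ i, dist (x i) (x 0) ≤ 1 / 4 := by
    intro i
    by_cases hi : i = 0
    · rw [hi, dist_self]; norm_num
    · have h := (hx 0 i (Fin.pos_iff_ne_zero.2 hi)).2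
      rw [dist_comm]
      refine h.le.trans ?_
      rw [div_le_iff₀ hε0]; linarith
  obtain ⟨T, hT⟩ := scale_config x hd00
  refine lower_bound τ γ (wMean μW) (by linarith) hμ μW H s ε hε0 0 b
    (by rw [hb]; field_simp; norm_num) (by rw [hb]; simp)
    (by norm_num) (by rw [hb]; field_simp; norm_num) t ⟨μW.real (Win ∩ Set.Iic t), hpos, ?_⟩ ρ
    (fun m i c => (((m:ℝ) ^ b * (n:ℝ) ^ (-b) * T i c : ℝ) : AddCircle (1:ℝ))) ?_ ?_ (fun hs i j hij hadj => ht2 i j hs hij hadj)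
  · refine Eventually.of_forall fun m => ?_
    simp [hWin]
  · filter_upwards [eventually_ge_atTop n] with m hm i j _
    have hmn : (n:ℝ) ≤ m := by exact_mod_cast hm
    have hm0 : (0:ℝ) < m := hn0.trans_le hmn
    have hmb := Real.rpow_pos_of_pos hm0 b
    rw [hT _ (by positivity) ?_]
    · rw [hρ]; ring
    · calc (m:ℝ) ^ b * (n:ℝ) ^ (-b) ≤ (n:ℝ) ^ b * (n:ℝ) ^ (-b) := by
            gcongr ?_ * _
            exact Real.rpow_le_rpow_of_nonpos hn0 hmn (by rw [hb]; simp)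
        _ = 1 := by rw [mul_comm]; exact hnb'
  · intro i j hij
    obtain ⟨h1, h2⟩ := hx i j hij
    constructor
    · calc ε = (n:ℝ) ^ (-b) * (ε * (n:ℝ) ^ b) := by linear_combination (-ε) * hnb'
        _ < _ := by rw [hρ]; simp only; gcongr
    · calc ρ i j < (n:ℝ) ^ (-b) * ((n:ℝ) ^ b / ε) := by rw [hρ]; simp only; gcongr
        _ = 1 / ε := by rw [← mul_div_assoc, hnb']

end config

section final
open scoped ENNReal Topology

theorem starNM_congr (s : StarKind) {k : ℕ} (H : SimpleGraph (Fin k)) (γ μbar ε : ℝ) (α : Fin k → ℝ)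
    (β β' : Fin k → Fin k → ℝ) (h : ∀ i j, i < j → β i j = β' i j) (d n : ℕ) (ω : GirgΩ d n) :
    starNM s H γ μbar ε α β d n ω = starNM s H γ μbar ε α β' d n ω := by
  have hM : Mset ε α β d n ω.1 ω.2.1 = Mset ε α β' d n ω.1 ω.2.1 := by
    ext v
    simp only [Mset, Set.mem_ofPred_eq]
    refine and_congr Iff.rfl (and_congr Iff.rfl ?_)
    refine forall_congr' fun i => forall_congr' fun j => forall_congr' fun hij => ?_
    rw [h i j hij]
  cases s
  · simp only [starNM, nIndM, hM]
  · simp only [starNM, nSubM, hM]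

theorem fExp_const (τ γ : ℝ) {k d : ℕ} [NeZero k] (H : SimpleGraph (Fin k)) (a b : ℝ) (hab : (d:ℝ) * b = 2 * a - 1)
    (β : Fin k → Fin k → ℝ) (h : ∀ i j, i < j → β i j = b) :
    fExp τ γ d H (fun _ => a) β = (k:ℝ) + (1 - τ) * (k * a) + d * ((k - 1) * b) := by
  have hk : 1 ≤ k := Nat.one_le_iff_ne_zero.2 (NeZero.ne k)
  unfold fExp
  have h1 : ∀ j : Fin k, minBeta β j = if j = 0 then 0 else b := by
    intro j
    unfold minBeta
    split_ifs with hj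
    · have : {x : ℝ | ∃ i, i < j ∧ x = β i j} = ∅ := by
        ext x; simp [hj]
      rw [this, Real.sInf_empty]
    · have : {x : ℝ | ∃ i, i < j ∧ x = β i j} = {b} := by
        ext x
        simp only [Set.mem_ofPred_eq, Set.mem_singleton_iff]
        constructor
        · rintro ⟨i, hi, rfl⟩; exact h i j hi
        · rintro rfl; exact ⟨0, Fin.pos_iff_ne_zero.2 hj, (h _ _ (Fin.pos_iff_ne_zero.2 hj)).symm⟩
      rw [this, csInf_singleton]
  have h2 : ∑ j : Fin k, minBeta β j = (k - 1) * b := by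
    simp_rw [h1]
    rw [Finset.sum_ite]
    simp only [Finset.sum_const_zero, zero_add, Finset.sum_const, nsmul_eq_mul]
    congr 1
    rw [Finset.filter_ne' , Finset.card_erase_of_mem (Finset.mem_univ _), Finset.card_univ, Fintype.card_fin,
      Nat.cast_sub hk, Nat.cast_one]
  rw [h2]
  simp only [Finset.sum_const, Finset.card_univ, Fintype.card_fin, nsmul_eq_mul]
  rw [Finset.sum_eq_zero, mul_zero, add_zero]
  intro p hp
  have hp1 : p.1 < p.2 := by
    classical
    simp only [Finset.mem_filter] at hp
    exact hp.2.1
  rw [h _ _ hp1, hab]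
  simp; linarith

theorem ind_vanish {k d : ℕ} (γ μbar : ℝ) (hγ : 0 < γ) (hμ : 0 < μbar)
    (μW : Measure ℝ) [IsProbabilityMeasure μW]
    (H : SimpleGraph (Fin k)) (ε : ℝ) (hε : 0 < ε) (α : Fin k → ℝ) (β : Fin k → Fin k → ℝ)
    (h : ¬ IndConstr d H α β) :
    ∀ᶠ n : ℕ in atTop, ∀ᵐ ω ∂(girgMeasure μW d n), nIndM H γ μbar ε α β d n ω = 0 := by
  unfold IndConstr at h
  push Not at h
  obtain ⟨i, j, hij, hadj, hlt⟩ := h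
  have hlim : Tendsto (fun n : ℕ => ε ^ 2 * ε ^ d / μbar * (n:ℝ) ^ (α i + α j - 1 - d * β i j)) atTop atTop :=
    ((tendsto_rpow_atTop (by linarith)).comp tendsto_natCast_atTop_atTop).const_mul_atTop (by positivity)
  filter_upwards [hlim.eventually_ge_atTop 1, eventually_ge_atTop 1] with n hn1 hn
  have hn0 : (0:ℝ) < n := by exact_mod_cast hn
  filter_upwards [ae_girg_coin μW d n] with ω hc
  rw [nIndM, Set.ncard_eq_zero]
  rw [Set.eq_empty_iff_forall_notMem]
  rintro v ⟨hM, hv⟩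
  refine hadj ((hv i j hij.ne).2 ⟨fun h => hij.ne (hM.1 h), (hc _).trans ?_⟩)
  have wi := (hM.2.1 i).1
  have wj := (hM.2.1 j).1
  obtain ⟨d1, d2⟩ := hM.2.2 i j hij
  have p1 := Real.rpow_pos_of_pos hn0 (α i)
  have p2 := Real.rpow_pos_of_pos hn0 (α j)
  have p3 := Real.rpow_pos_of_pos hn0 (β i j)
  have dpos : 0 < dist (ω.2.1 (v i)) (ω.2.1 (v j)) := lt_of_lt_of_le (by positivity) d1
  refine le_min le_rfl (Real.one_le_rpow (hn1.trans ?_) hγ.le)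
  rw [le_div_iff₀ (by positivity)]
  have e2 : dist (ω.2.1 (v i)) (ω.2.1 (v j)) ^ d * ε ^ d ≤ ((n:ℝ) ^ (β i j)) ^ d := by
    rw [← mul_pow]
    exact pow_le_pow_left₀ (by positivity) ((le_div_iff₀ hε).1 d2) _
  have e3 : (ε * (n:ℝ) ^ (α i)) * (ε * (n:ℝ) ^ (α j)) ≤ ω.1 (v i) * ω.1 (v j) :=
    mul_le_mul wi wj (by positivity) (le_trans (by positivity) wi)
  have e4 : (n:ℝ) ^ (α i + α j - 1 - d * β i j) * (n * ((n:ℝ) ^ (β i j)) ^ d) = (n:ℝ) ^ (α i) * (n:ℝ) ^ (α j) := by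
    rw [← Real.rpow_natCast, ← Real.rpow_mul hn0.le, ← Real.rpow_add hn0]
    nth_rewrite 2 [← Real.rpow_one (n:ℝ)]
    rw [← Real.rpow_add hn0, ← Real.rpow_add hn0]
    congr 1; ring
  calc ε ^ 2 * ε ^ d / μbar * (n:ℝ) ^ (α i + α j - 1 - d * β i j) * (n * μbar * dist (ω.2.1 (v i)) (ω.2.1 (v j)) ^ d)
      = ε ^ 2 * ((n:ℝ) ^ (α i + α j - 1 - d * β i j) * (n * (dist (ω.2.1 (v i)) (ω.2.1 (v j)) ^ d * ε ^ d))) := by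
        field_simp
    _ ≤ ε ^ 2 * ((n:ℝ) ^ (α i + α j - 1 - d * β i j) * (n * ((n:ℝ) ^ (β i j)) ^ d)) := by gcongr
    _ = (ε * (n:ℝ) ^ (α i)) * (ε * (n:ℝ) ^ (α j)) := by rw [e4]; ring
    _ ≤ _ := e3

theorem starNM_le_nSubM (s : StarKind) {k : ℕ} (H : SimpleGraph (Fin k)) (γ μbar ε : ℝ) (α : Fin k → ℝ)
    (β : Fin k → Fin k → ℝ) (d n : ℕ) (ω : GirgΩ d n) :
    starNM s H γ μbar ε α β d n ω ≤ nSubM H γ μbar ε α β d n ω := by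
  cases s
  · exact nInd_le_nSub ..
  · exact le_rfl

theorem ratio_main {k d : ℕ} [NeZero k] (hd : 1 ≤ d) (τ γ c : ℝ) (hτ : τ ∈ Set.Ioo (2:ℝ) 3) (hγ : 1 < γ)
    (μW : Measure ℝ) [IsProbabilityMeasure μW] (hW : WeightTail τ c μW)
    (H : SimpleGraph (Fin k)) (s : StarKind) (a b : ℝ) (hab : (d:ℝ) * b = 2 * a - 1)
    (αstar : Fin k → ℝ) (βstar : Fin k → Fin k → ℝ)
    (hopt : UniquelyOptimal s τ γ d H αstar βstar)
    (ha : ∀ i, αstar i = a) (hb : ∀ i j : Fin k, i < j → βstar i j = b)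
    (α : Fin k → ℝ) (β : Fin k → Fin k → ℝ) (hfeas : Feasible τ d α β)
    (hne : ¬(α = αstar ∧ ∀ i j : Fin k, i < j → β i j = βstar i j))
    (ε : ℝ) (hε : ε ∈ Set.Ioo (0:ℝ) 1)
    (hdich : (∃ c1 > 0, Tendsto (fun n : ℕ => girgMeasure μW d n
      {ω | (starNM s H γ (wMean μW) ε (fun _ => a) (fun _ _ => b) d n ω : ℝ) <
        c1 * (n:ℝ) ^ ((k:ℝ) + (1 - τ) * (k * a) + d * ((k - 1) * b))}) atTop (𝓝 0)) ∨
    (∀ᶠ n : ℕ in atTop, ∀ᵐ ω ∂(girgMeasure μW d n),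
      starNM s H γ (wMean μW) ε (fun _ => a) (fun _ _ => b) d n ω = 0)) :
    ∀ δ : ℝ, 0 < δ →
      Tendsto (fun n : ℕ => girgMeasure μW d n
          {ω | δ ≤ (starNM s H γ (wMean μW) ε α β d n ω : ℝ) /
                   (starNM s H γ (wMean μW) ε αstar βstar d n ω : ℝ)})
        atTop (𝓝 0) := by
  intro δ hδ
  have hα : αstar = fun _ => a := funext ha
  subst hα
  have hstar : ∀ n ω, starNM s H γ (wMean μW) ε (fun _ => a) βstar d n ω =
      starNM s H γ (wMean μW) ε (fun _ => a) (fun _ _ => b) d n ω :=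
    fun n ω => starNM_congr s H γ _ ε _ _ _ hb d n ω
  simp only [hstar]
  have hf := fExp_const τ γ H a b hab βstar hb
  have hμ := wMean_pos hτ.1 μW hW
  have hzero : ∀ n : ℕ, (∀ᵐ ω ∂(girgMeasure μW d n), starNM s H γ (wMean μW) ε α β d n ω = 0 ∨
      starNM s H γ (wMean μW) ε (fun _ => a) (fun _ _ => b) d n ω = 0) →
      girgMeasure μW d n {ω | δ ≤ (starNM s H γ (wMean μW) ε α β d n ω : ℝ) /
                   (starNM s H γ (wMean μW) ε (fun _ => a) (fun _ _ => b) d n ω : ℝ)} = 0 := by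
    intro n h
    have h2 : ∀ᵐ ω ∂(girgMeasure μW d n), ¬ (δ ≤ (starNM s H γ (wMean μW) ε α β d n ω : ℝ) /
                   (starNM s H γ (wMean μW) ε (fun _ => a) (fun _ _ => b) d n ω : ℝ)) := by
      filter_upwards [h] with ω hω
      rcases hω with h | h <;> simp [h, hδ]
    rw [ae_iff] at h2
    simpa only [not_not] using h2
  rcases hdich with ⟨c1, hc1, hlow⟩ | hz
  swap
  · refine tendsto_const_nhds.congr' ?_
    filter_upwards [hz] with n hn
    exact (hzero n (hn.mono fun ω h => Or.inr h)).symm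
  by_cases hind : s = .ind ∧ ¬ IndConstr d H α β
  · obtain ⟨rfl, hI⟩ := hind
    refine tendsto_const_nhds.congr' ?_
    filter_upwards [ind_vanish γ (wMean μW) (by linarith) hμ μW H ε hε.1 α β hI] with n hn
    exact (hzero n (hn.mono fun ω h => Or.inl h)).symm
  have hlt : fExp τ γ d H α β < (k:ℝ) + (1 - τ) * (k * a) + d * ((k - 1) * b) := by
    rw [← hf]
    obtain ⟨ho, hu⟩ := hopt
    cases s with
    | sub =>
      refine lt_of_le_of_ne (ho.2 α β hfeas) fun heq => hne (hu α β ⟨hfeas, fun α' β' h' => ?_⟩)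
      rw [heq]; exact ho.2 α' β' h'
    | ind =>
      have hI : IndConstr d H α β := by
        by_contra h; exact hind ⟨rfl, h⟩
      refine lt_of_le_of_ne (ho.2.2 α β hfeas hI) fun heq => hne (hu α β ⟨hfeas, hI, fun α' β' h' h'' => ?_⟩)
      rw [heq]; exact ho.2.2 α' β' h' h''
  set F := (k:ℝ) + (1 - τ) * (k * a) + d * ((k - 1) * b) with hF
  obtain ⟨C, hC, hfm⟩ := first_moment τ γ c hτ.1 hγ μW hW H α β ε hε.1
  have hlim : Tendsto (fun n : ℕ => ENNReal.ofReal (C / (δ * c1) * (n:ℝ) ^ (-(F - fExp τ γ d H α β)))) atTop (𝓝 0) := by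
    rw [← ENNReal.ofReal_zero]
    refine ENNReal.tendsto_ofReal ?_
    have := ((tendsto_rpow_neg_atTop (y := F - fExp τ γ d H α β) (by linarith)).comp
      tendsto_natCast_atTop_atTop).const_mul (C / (δ * c1))
    rw [mul_zero] at this
    exact this
  have hsum := hlow.add hlim
  rw [add_zero] at hsum
  refine tendsto_of_tendsto_of_tendsto_of_le_of_le' tendsto_const_nhds hsum
    (Eventually.of_forall fun _ => zero_le) ?_
  filter_upwards [eventually_ge_atTop 1] with n hn
  have hn0 : (0:ℝ) < n := by exact_mod_cast hn
  have hnF := Real.rpow_pos_of_pos hn0 F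
  have hm := hfm n hn (δ * (c1 * (n:ℝ) ^ F)) (by positivity)
  have e : C * (n:ℝ) ^ fExp τ γ d H α β / (δ * (c1 * (n:ℝ) ^ F)) =
      C / (δ * c1) * (n:ℝ) ^ (-(F - fExp τ γ d H α β)) := by
    rw [neg_sub, Real.rpow_sub hn0]
    field_simp
  rw [e] at hm
  refine le_trans (measure_mono ?_) ((measure_union_le _ _).trans (add_le_add_right hm _))
  intro ω hω
  rw [Set.mem_ofPred_eq] at hω
  by_cases hl : (starNM s H γ (wMean μW) ε (fun _ => a) (fun _ _ => b) d n ω : ℝ) < c1 * (n:ℝ) ^ F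
  · exact Or.inl hl
  · right
    rw [not_lt] at hl
    have hpos : 0 < (starNM s H γ (wMean μW) ε (fun _ => a) (fun _ _ => b) d n ω : ℝ) :=
      lt_of_lt_of_le (by positivity) hl
    rw [le_div_iff₀ hpos] at hω
    have h1 : (starNM s H γ (wMean μW) ε α β d n ω : ℝ) ≤ (nSubM H γ (wMean μW) ε α β d n ω : ℝ) := by
      exact_mod_cast starNM_le_nSubM s H γ (wMean μW) ε α β d n ω
    exact (mul_le_mul_of_nonneg_left hl hδ.le).trans (hω.trans h1)

end final

/-- Theorem `subgraphGIRGprob`, second part: under the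
hypotheses of the previous theorem, for every feasible `(α,β) ≠ (α*,β*)` the ratio
`N^⋆(H; M_ε^{(α,β)}) / N^⋆(H; M_ε^{(α*,β*)})` tends to `0` in probability. -/
theorem girg_suboptimal_count_ratio
    {k d : ℕ} (hd : 1 ≤ d) (τ γ c : ℝ) (hτ : τ ∈ Set.Ioo (2:ℝ) 3) (hγ : 1 < γ)
    (μW : Measure ℝ) [IsProbabilityMeasure μW] (hW : WeightTail τ c μW)
    (H : SimpleGraph (Fin k)) (s : StarKind)
    (αstar : Fin k → ℝ) (βstar : Fin k → Fin k → ℝ)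
    (hopt : UniquelyOptimal s τ γ d H αstar βstar)
    (hval : ((∀ i, αstar i = 1/2) ∧ (∀ i j : Fin k, i < j → βstar i j = 0)) ∨
            ((∀ i, αstar i = 0) ∧ (∀ i j : Fin k, i < j → βstar i j = -(1 / (d:ℝ)))))
    (α : Fin k → ℝ) (β : Fin k → Fin k → ℝ) (hfeas : Feasible τ d α β)
    (hne : ¬(α = αstar ∧ ∀ i j : Fin k, i < j → β i j = βstar i j))
    (ε : ℝ) (hε : ε ∈ Set.Ioo (0:ℝ) 1) :
    ∀ δ : ℝ, 0 < δ →
      Tendsto (fun n : ℕ => girgMeasure μW d n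
          {ω | δ ≤ (starNM s H γ (wMean μW) ε α β d n ω : ℝ) /
                   (starNM s H γ (wMean μW) ε αstar βstar d n ω : ℝ)})
        atTop (nhds 0) := by
  have hd0 : (0:ℝ) < d := by exact_mod_cast hd
  rcases Nat.eq_zero_or_pos k with hk | hk
  · subst hk
    exact absurd ⟨Subsingleton.elim _ _, fun i => i.elim0⟩ hne
  haveI : NeZero k := ⟨hk.ne'⟩
  rcases hval with ⟨ha, hb⟩ | ⟨ha, hb⟩
  · exact ratio_main hd τ γ c hτ hγ μW hW H s (1/2) 0 (by norm_num) αstar βstar hopt ha hb α β hfeas hne ε hε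
      (dich_half hd τ γ c hτ hγ μW hW H s ε hε)
  · exact ratio_main hd τ γ c hτ hγ μW hW H s 0 (-(1 / (d:ℝ))) (by field_simp; norm_num) αstar βstar hopt ha hb
      α β hfeas hne ε hε (dich_zero hd τ γ c hτ hγ μW hW H s ε hε)

end
end
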